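/- arXiv:math/0602389 — 2 statements merged into one kernel-verified Lean document; each statement's English description precedes it below -/
import Mathlib

section
/- Let 1 < p < ∞ and let u be a Lipschitz function on ℝ^N such that: (1) u ≥ 0 on ℝ^N and u is p-harmonic in the open set {u > 0}; (2) {x : x_N < 0} ⊂ {u > 0} and u = 0 on {x : x_N = 0}; (3) there exists 0 < λ₀ < 1 such that |{u = 0} ∩ B_R(0)| / |B_R(0)| > λ₀ for every R > 0. Then u = 0 on {x : x_N > 0}. -/
/-!
Let `a` be the supremum of `u / x_N` over the upper half-space; it is at most the Lipschitz
constant, since `u` vanishes on `{x_N = 0}`. If `u` does not vanish in the upper half-space then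
`a > 0`, and a contradiction comes from lowering the slope (`improve_slope`).

Thin slabs around `{x_N = 0}` fill a small proportion of a ball, so the density condition gives
`δ > 0` and, for every `R > 0`, a zero `z` of `u` with `|z| ≤ R` and `z_N ≥ δ R`
(`exists_zero_at_scale`). Consider the truncated paraboloid `D = {t < 1, q > 0}` with vertex `0`
and axis through `z`, where `t = x_N / z_N`, `q = t - m |x - t z|^2` and `m = (ρ R)^{-2}`. By the
Lipschitz bound, for small `ρ` the function `u` lies well below `a x_N` on the top `{t = 1}` of
`D`. The barrier `h = a x_N - ε (exp (K q) - 1)` thus dominates `u` on the boundary of `D`: on the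
lateral part `h = a x_N`. The derivative of `q` along `z` equals `1`, so that of `h` is positive,
whence `∇h ≠ 0`, and `|∇q| ≥ 1 / R`, whence the rank-one part `K^2 ∇q ⊗ ∇q` of the Hessian of
`exp (K q)` dominates the rest once `K` is large, independently of `R`; hence `Δ_p h ≤ 0` in `D` (`barrier_ineq`, `weak_super_of_pointwise`).

The weak comparison principle (`comparison`) gives `u ≤ h` in `D` (`barrier_bound`). It is proved
by testing with the Lipschitz function `(u - h - η)^+`, supported in `D ∩ {u > 0}`, after
mollification; Rademacher's theorem and the strict monotonicity of `v ↦ |v|^{p-2} v` force its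
derivative to vanish almost everywhere. For fixed `x` and `R` large, `u ≤ h` yields
`u x ≤ (a - θ) x_N` with `θ = a δ / (4 e^K)` independent of `x`, contradicting the choice of `a`.
-/

open MeasureTheory Metric Set Filter Asymptotics
open scoped RealInnerProductSpace ENNReal NNReal Topology

noncomputable section

abbrev EuD (N : ℕ) := EuclideanSpace ℝ (Fin N)

variable {N : ℕ}

/-- The penalization function `F_ε`. -/
def Fpen (ε α s : ℝ) : ℝ := if s < α then ε * (s - α) else ε⁻¹ * (s - α)

/-- The admissible class `K`: `W^{1,p}(Ω)` functions with boundary values `φ₀` on `∂Ω`. -/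
def MemK (p : ℝ) (Ω : Set (EuD N)) (φ₀ u : EuD N → ℝ) : Prop :=
  IntegrableOn (fun x => |u x| ^ p) Ω volume ∧
  IntegrableOn (fun x => ‖gradient u x‖ ^ p) Ω volume ∧
  Set.EqOn u φ₀ (frontier Ω)

/-- The penalized functional `J_ε(u) = ∫_Ω |∇u|^p + F_ε(|{u>0}|)`. -/
def Jpen (p ε α : ℝ) (Ω : Set (EuD N)) (u : EuD N → ℝ) : ℝ :=
  (∫ x in Ω, ‖gradient u x‖ ^ p) + Fpen ε α (volume {x ∈ Ω | 0 < u x}).toReal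

/-- A solution to problem `(P_ε)`: a minimizer of `J_ε` over `K`. -/
def IsSolP (p ε α : ℝ) (Ω : Set (EuD N)) (φ₀ u : EuD N → ℝ) : Prop :=
  MemK p Ω φ₀ u ∧ ∀ v, MemK p Ω φ₀ v → Jpen p ε α Ω u ≤ Jpen p ε α Ω v

/-- Test functions: `C_0^∞` functions with support in `U`. -/
def TestOn (U : Set (EuD N)) (φ : EuD N → ℝ) : Prop :=
  ContDiff ℝ (⊤ : ℕ∞) φ ∧ HasCompactSupport φ ∧ tsupport φ ⊆ U

/-- The pairing `∫ |∇u|^{p-2} ∇u · ∇φ`. -/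
def pLap (p : ℝ) (u φ : EuD N → ℝ) : ℝ :=
  ∫ x, ‖gradient u x‖ ^ (p - 2) * ⟪gradient u x, gradient φ x⟫

/-- Weakly `p`-harmonic in the open set `U`. -/
def pHarmonicOn (p : ℝ) (U : Set (EuD N)) (u : EuD N → ℝ) : Prop :=
  ∀ φ : EuD N → ℝ, TestOn U φ → pLap p u φ = 0

/-- Weakly `p`-subharmonic in the open set `U`. -/
def pSubharmonicOn (p : ℝ) (U : Set (EuD N)) (u : EuD N → ℝ) : Prop :=
  ∀ φ : EuD N → ℝ, TestOn U φ → (∀ x, 0 ≤ φ x) → pLap p u φ ≤ 0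

/-- `ν` is the measure-theoretic outward unit normal to `A` at `x₀`. -/
def HasMTNormal (A : Set (EuD N)) (x₀ ν : EuD N) : Prop :=
  ‖ν‖ = 1 ∧
  Tendsto (fun r : ℝ =>
      (volume (A ∩ ball x₀ r ∩ {y | 0 < ⟪y - x₀, ν⟫})).toReal / r ^ N)
    (𝓝[>] (0 : ℝ)) (𝓝 0) ∧
  Tendsto (fun r : ℝ =>
      (volume ((ball x₀ r \ A) ∩ {y | ⟪y - x₀, ν⟫ < 0})).toReal / r ^ N)
    (𝓝[>] (0 : ℝ)) (𝓝 0)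

/-- The reduced boundary of `A` (points with a measure-theoretic unit normal). -/
def redBdry (A : Set (EuD N)) : Set (EuD N) := {x | ∃ ν, HasMTNormal A x ν}

/-- Locally Lipschitz continuous in `Ω`. -/
def LocLipschitzOn (Ω : Set (EuD N)) (u : EuD N → ℝ) : Prop :=
  ∀ x ∈ Ω, ∃ (K : ℝ≥0) (t : Set (EuD N)), t ∈ 𝓝[Ω] x ∧ LipschitzOnWith K u t

/-- The `N`-th coordinate `x_N` of `x ∈ ℝ^N`. -/
def lastCoord {N : ℕ} (hN : 0 < N) (x : EuD N) : ℝ :=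
  x ⟨N - 1, Nat.sub_lt hN Nat.one_pos⟩

/-! ### Mollification of Lipschitz functions -/

/-- The convolution of a Lipschitz function with a bump function has derivative the convolution
of the almost everywhere derivative. -/
lemma hasFDerivAt_mollify {ψ : EuD N → ℝ} {C : ℝ≥0} (hψ : LipschitzWith C ψ)
    (η : ContDiffBump (0 : EuD N)) (x : EuD N) :
    HasFDerivAt (fun y => ∫ t, η.normed volume t * ψ (y - t))
      (∫ t, η.normed volume t • fderiv ℝ ψ (x - t)) x := by
  have hηc : Continuous (η.normed volume) := η.continuous_normed
  have hηs : HasCompactSupport (η.normed volume) := η.hasCompactSupport_normed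
  have hcont : ∀ y, Continuous fun t => η.normed volume t * ψ (y - t) := fun y =>
    hηc.mul (hψ.continuous.comp (continuous_const.sub continuous_id))
  refine (hasFDerivAt_integral_of_dominated_loc_of_lip (s := univ)
    (bound := fun t => C * η.normed volume t)
    (F := fun y t => η.normed volume t * ψ (y - t))
    (F' := fun t => η.normed volume t • fderiv ℝ ψ (x - t)) univ_mem ?_ ?_ ?_ ?_ ?_ ?_).2
  · exact Eventually.of_forall fun y => (hcont y).aestronglyMeasurable
  · exact (hcont x).integrable_of_hasCompactSupport (hηs.mul_right)
  · exact (hηc.aestronglyMeasurable).smul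
      (((measurable_fderiv ℝ ψ).comp (measurable_const.sub measurable_id)).aestronglyMeasurable)
  · refine Eventually.of_forall fun t => LipschitzOnWith.of_dist_le_mul fun a _ b _ => ?_
    have h1 := hψ.dist_le_mul (a - t) (b - t)
    have h2 := η.nonneg_normed (μ := volume) t
    rw [dist_sub_right] at h1
    rw [Real.dist_eq, ← mul_sub, abs_mul, abs_of_nonneg h2, ← Real.dist_eq, Real.coe_nnabs,
      abs_of_nonneg (mul_nonneg C.coe_nonneg h2)]
    nlinarith
  · exact (η.integrable_normed).const_mul _
  · have h := hψ.ae_differentiableAt (μ := volume)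
    have h' : ∀ᵐ t : EuD N, DifferentiableAt ℝ ψ (x - t) :=
      (Measure.measurePreserving_sub_left volume x).quasiMeasurePreserving.ae h
    filter_upwards [h'] with t ht
    have h3 : HasFDerivAt (fun y => ψ (y - t)) (fderiv ℝ ψ (x - t)) x := by
      rw [← ContinuousLinearMap.comp_id (fderiv ℝ ψ (x - t))]
      exact ht.hasFDerivAt.comp x ((hasFDerivAt_id x).sub_const t)
    exact h3.const_mul _

/-- A compactly supported nonnegative Lipschitz function has nonnegative mollifications which are
test functions and whose derivatives converge almost everywhere and boundedly. The last clause,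
that the function vanishes once its derivative does almost everywhere, also follows by
mollification. -/
lemma exists_test_approx [Nontrivial (EuD N)] {ψ : EuD N → ℝ} {C : ℝ≥0} (hψ : LipschitzWith C ψ)
    (hc : HasCompactSupport ψ) (h0 : ∀ x, 0 ≤ ψ x) {U : Set (EuD N)} (hU : IsOpen U)
    (hs : tsupport ψ ⊆ U) :
    ∃ φ : ℕ → EuD N → ℝ, (∀ n, TestOn U (φ n) ∧ ∀ x, 0 ≤ φ n x) ∧
      (∀ n x, ‖fderiv ℝ (φ n) x‖ ≤ C) ∧
      (∃ K, IsCompact K ∧ ∀ n, ∀ x ∉ K, fderiv ℝ (φ n) x = 0) ∧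
      (∀ᵐ x, Tendsto (fun n => fderiv ℝ (φ n) x) atTop (𝓝 (fderiv ℝ ψ x))) ∧
      ((∀ᵐ x, fderiv ℝ ψ x = 0) → ∀ x, ψ x = 0) := by
  obtain ⟨δ, hδ, hδU⟩ := hc.isCompact.exists_cthickening_subset_open hU hs
  have hr : ∀ n : ℕ, 0 < δ / (n + 1) := fun n => by positivity
  have hrle : ∀ n : ℕ, δ / (n + 1) ≤ δ := fun n => div_le_self hδ.le (by simp)
  let η : ℕ → ContDiffBump (0 : EuD N) := fun n =>
    ⟨δ / (n + 1) / 2, δ / (n + 1), half_pos (hr n), half_lt_self (hr n)⟩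
  let φ : ℕ → EuD N → ℝ := fun n =>
    convolution ((η n).normed volume) ψ (ContinuousLinearMap.lsmul ℝ ℝ) volume
  have hφ : ∀ n, φ n = fun y => ∫ t, (η n).normed volume t * ψ (y - t) := fun n => by
    ext y; simp [φ, convolution]
  have hd : ∀ n x, HasFDerivAt (φ n) (∫ t, (η n).normed volume t • fderiv ℝ ψ (x - t)) x :=
    fun n x => by rw [hφ]; exact hasFDerivAt_mollify hψ (η n) x
  have hout : Tendsto (fun n => (η n).rOut) atTop (𝓝 0) :=
    (tendsto_const_div_atTop_nhds_zero_nat δ).comp (tendsto_add_atTop_nat 1) |>.congr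
      fun n => by simp [η]
  have hsupp : ∀ n, tsupport (φ n) ⊆ cthickening δ (tsupport ψ) := by
    intro n
    refine closure_minimal ?_ isClosed_cthickening
    intro x hx
    obtain ⟨a, ha, b, hb, rfl⟩ := support_convolution_subset _ hx
    rw [(η n).support_normed_eq] at ha
    refine mem_cthickening_of_dist_le (a + b) b δ _ (subset_tsupport _ hb) ?_
    have : dist a 0 < δ / (n + 1) := ha
    rw [dist_eq_norm, add_sub_cancel_right]
    rw [dist_zero_right] at this
    exact this.le.trans (hrle n)
  have hK : IsCompact (cthickening δ (tsupport ψ)) := hc.isCompact.cthickening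
  have hli : LocallyIntegrable (fderiv ℝ ψ) (volume : Measure (EuD N)) := by
    refine (locallyIntegrable_const (C : ℝ)).mono
      (measurable_fderiv ℝ ψ).aestronglyMeasurable (Eventually.of_forall fun x => ?_)
    simpa using norm_fderiv_le_of_lipschitz ℝ hψ
  refine ⟨φ, fun n => ⟨⟨?_, hK.of_isClosed_subset (isClosed_tsupport _) (hsupp n),
    (hsupp n).trans hδU⟩, fun x => ?_⟩, fun n x => ?_, ⟨_, hK, fun n x hx => ?_⟩, ?_, ?_⟩
  · exact (η n).hasCompactSupport_normed.contDiff_convolution_left _ (η n).contDiff_normed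
      hψ.continuous.locallyIntegrable
  · rw [hφ]
    exact integral_nonneg fun t => mul_nonneg ((η n).nonneg_normed _) (h0 _)
  · rw [(hd n x).fderiv]
    calc _ ≤ ∫ t, (η n).normed volume t * C := by
          refine norm_integral_le_of_norm_le ((η n).integrable_normed.mul_const _)
            (Eventually.of_forall fun t => ?_)
          rw [norm_smul, Real.norm_of_nonneg ((η n).nonneg_normed _)]
          exact mul_le_mul_of_nonneg_left (norm_fderiv_le_of_lipschitz ℝ hψ)
            ((η n).nonneg_normed _)
      _ = C := by rw [integral_mul_const, (η n).integral_normed, one_mul]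
  · have : x ∉ tsupport (φ n) := fun h => hx (hsupp n h)
    exact fderiv_of_notMem_tsupport ℝ this
  · have := ContDiffBump.ae_convolution_tendsto_right_of_locallyIntegrable (φ := η) (K := 2)
      hout (Eventually.of_forall fun n => by simp only [η]; linarith) hli
    filter_upwards [this] with x hx
    refine hx.congr fun n => ?_
    rw [(hd n x).fderiv]
    simp [convolution]
  · intro hz x
    have hzero : ∀ n, φ n = 0 := by
      intro n
      have hdz : ∀ y, fderiv ℝ (φ n) y = 0 := by
        intro y
        rw [(hd n y).fderiv]
        refine integral_eq_zero_of_ae ?_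
        have h' : ∀ᵐ t : EuD N, fderiv ℝ ψ (y - t) = 0 :=
          (Measure.measurePreserving_sub_left volume y).quasiMeasurePreserving.ae hz
        filter_upwards [h'] with t ht
        simp [ht]
      have hconst := is_const_of_fderiv_eq_zero (fun y => (hd n y).differentiableAt) hdz
      have : NoncompactSpace (EuD N) := NormedSpace.noncompactSpace ℝ (EuD N)
      obtain ⟨y₀, hy₀⟩ := (ne_univ_iff_exists_notMem _).1 hK.ne_univ
      ext y
      rw [hconst y y₀]
      exact image_eq_zero_of_notMem_tsupport fun h => hy₀ (hsupp n h)
    have := ContDiffBump.convolution_tendsto_right_of_continuous (μ := volume) (φ := η)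
      hout hψ.continuous x
    refine tendsto_nhds_unique this ?_
    have h2 : ∀ n, (convolution ((η n).normed volume) ψ (ContinuousLinearMap.lsmul ℝ ℝ)
        volume) x = 0 := fun n => congrFun (hzero n) x
    simp [h2]

/-! ### The flux of the `p`-Laplacian and weak comparison -/

/-- The flux `|a|^{p-2} a` of the `p`-Laplacian. -/
def pflux (p : ℝ) (a : EuD N) : EuD N := ‖a‖ ^ (p - 2) • a

lemma rpow_sub_two_mul_self {p s : ℝ} (hp : 1 < p) (hs : 0 ≤ s) :
    s ^ (p - 2) * s = s ^ (p - 1) := by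
  rw [show p - 1 = (p - 2) + 1 by ring, Real.rpow_add_one' hs (by linarith)]

lemma norm_pflux {p : ℝ} (hp : 1 < p) (a : EuD N) : ‖pflux p a‖ = ‖a‖ ^ (p - 1) := by
  rw [pflux, norm_smul, Real.norm_of_nonneg (by positivity),
    rpow_sub_two_mul_self hp (norm_nonneg a)]

lemma measurable_pflux (p : ℝ) : Measurable (pflux (N := N) p) :=
  (measurable_norm.pow_const (p - 2)).smul measurable_id

lemma pflux_inner_eq (p : ℝ) (a b : EuD N) :
    ⟪pflux p a - pflux p b, a - b⟫ =
      (‖a‖ ^ (p - 2) * ‖a‖ - ‖b‖ ^ (p - 2) * ‖b‖) * (‖a‖ - ‖b‖) +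
        (‖a‖ ^ (p - 2) + ‖b‖ ^ (p - 2)) * (‖a‖ * ‖b‖ - ⟪a, b⟫) := by
  simp only [pflux, inner_sub_left, inner_sub_right, real_inner_smul_left,
    real_inner_self_eq_norm_sq, real_inner_comm a b]
  ring

lemma pflux_first_nonneg {p : ℝ} (hp : 1 < p) {s t : ℝ} (hs : 0 ≤ s) (ht : 0 ≤ t) :
    0 ≤ (s ^ (p - 2) * s - t ^ (p - 2) * t) * (s - t) := by
  rw [rpow_sub_two_mul_self hp hs, rpow_sub_two_mul_self hp ht]
  rcases le_total s t with h | h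
  · have := Real.rpow_le_rpow hs h (by linarith : 0 ≤ p - 1)
    exact mul_nonneg_of_nonpos_of_nonpos (by linarith) (by linarith)
  · have := Real.rpow_le_rpow ht h (by linarith : 0 ≤ p - 1)
    exact mul_nonneg (by linarith) (by linarith)

lemma pflux_monotone {p : ℝ} (hp : 1 < p) (a b : EuD N) :
    0 ≤ ⟪pflux p a - pflux p b, a - b⟫ := by
  rw [pflux_inner_eq]
  exact add_nonneg (pflux_first_nonneg hp (norm_nonneg a) (norm_nonneg b))
    (mul_nonneg (by positivity) (sub_nonneg.2 (real_inner_le_norm a b)))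

lemma pflux_strict {p : ℝ} (hp : 1 < p) {a b : EuD N}
    (h : ⟪pflux p a - pflux p b, a - b⟫ = 0) : a = b := by
  rw [pflux_inner_eq] at h
  have h1 := pflux_first_nonneg hp (norm_nonneg a) (norm_nonneg b)
  have h2 : 0 ≤ (‖a‖ ^ (p - 2) + ‖b‖ ^ (p - 2)) * (‖a‖ * ‖b‖ - ⟪a, b⟫) :=
    mul_nonneg (by positivity) (sub_nonneg.2 (real_inner_le_norm a b))
  have h3 : (‖a‖ ^ (p - 2) * ‖a‖ - ‖b‖ ^ (p - 2) * ‖b‖) * (‖a‖ - ‖b‖) = 0 := by linarith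
  have hab : ‖a‖ = ‖b‖ := by
    rw [rpow_sub_two_mul_self hp (norm_nonneg a), rpow_sub_two_mul_self hp (norm_nonneg b)] at h3
    rcases mul_eq_zero.1 h3 with h4 | h4
    · exact (Real.rpow_left_inj (norm_nonneg a) (norm_nonneg b) (by linarith)).1
        (sub_eq_zero.1 h4)
    · linarith
  rcases eq_or_ne a 0 with rfl | ha
  · rw [norm_zero] at hab
    exact (norm_eq_zero.1 hab.symm).symm
  · have hpos : 0 < ‖a‖ ^ (p - 2) := Real.rpow_pos_of_pos (norm_pos_iff.2 ha) _
    have h5 : ‖a‖ * ‖b‖ - ⟪a, b⟫ = 0 := by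
      have h6 : (‖a‖ ^ (p - 2) + ‖b‖ ^ (p - 2)) * (‖a‖ * ‖b‖ - ⟪a, b⟫) = 0 := by linarith
      exact (mul_eq_zero.1 h6).resolve_left (by rw [← hab]; positivity)
    have h7 : ‖a - b‖ ^ 2 = 0 := by
      rw [norm_sub_sq_real]
      rw [← hab] at h5 ⊢
      linarith
    exact sub_eq_zero.1 (norm_eq_zero.1 (by simpa using h7))

lemma measurable_gradient (u : EuD N → ℝ) : Measurable (gradient u) :=
  (InnerProductSpace.toDual ℝ (EuD N)).symm.continuous.measurable.comp (measurable_fderiv ℝ u)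

lemma norm_gradient (u : EuD N → ℝ) (x : EuD N) : ‖gradient u x‖ = ‖fderiv ℝ u x‖ :=
  (InnerProductSpace.toDual ℝ (EuD N)).symm.norm_map _

/-- Truncating a Lipschitz function to a set on whose boundary it is nonpositive keeps it
Lipschitz. -/
lemma lipschitz_indicator_max {g : EuD N → ℝ} {C : ℝ≥0} (hg : LipschitzWith C g)
    {D : Set (EuD N)} (hD : IsOpen D) (hbd : ∀ x ∈ frontier D, g x ≤ 0) :
    LipschitzWith C (D.indicator fun x => max (g x) 0) := by
  have key : ∀ x y, x ∈ D → y ∉ D → max (g x) 0 ≤ C * dist x y := by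
    intro x y hx hy
    refine max_le ?_ (by positivity)
    obtain ⟨c, hc, hcf⟩ : ∃ c ∈ segment ℝ x y, c ∈ frontier D := by
      by_contra! hno
      have hcov : ∀ c ∈ segment ℝ x y, c ∉ D → c ∈ (closure D)ᶜ := fun c hc hcD hcl =>
        hno c hc ⟨hcl, by rwa [hD.interior_eq]⟩
      obtain ⟨c, -, hc1, hc2⟩ := (convex_segment (𝕜 := ℝ) x y).isPreconnected D (closure D)ᶜ
        hD isClosed_closure.isOpen_compl (fun c hc => or_iff_not_imp_left.2 (hcov c hc))
        ⟨x, left_mem_segment ℝ x y, hx⟩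
        ⟨y, right_mem_segment ℝ x y, hcov y (right_mem_segment ℝ x y) hy⟩
      exact hc2 (subset_closure hc1)
    have h1 := (le_abs_self _).trans (hg.dist_le_mul x c)
    have h2 := hbd c hcf
    have h3 : dist x c ≤ dist x y := by
      have := dist_add_dist_of_mem_segment hc
      linarith [dist_nonneg (x := c) (y := y)]
    have h4 := mul_le_mul_of_nonneg_left h3 C.coe_nonneg
    linarith
  refine LipschitzWith.of_dist_le_mul fun x y => ?_
  by_cases hx : x ∈ D <;> by_cases hy : y ∈ D
  · rw [indicator_of_mem hx, indicator_of_mem hy]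
    exact (hg.max_const 0).dist_le_mul x y
  · rw [indicator_of_mem hx, indicator_of_notMem hy, Real.dist_eq, sub_zero,
      abs_of_nonneg (le_max_right _ _)]
    exact key x y hx hy
  · rw [indicator_of_notMem hx, indicator_of_mem hy, Real.dist_eq, zero_sub, abs_neg,
      abs_of_nonneg (le_max_right _ _), dist_comm]
    exact key y x hy hx
  · rw [indicator_of_notMem hx, indicator_of_notMem hy, dist_self]
    positivity

/-- Weak comparison of the nonnegative function `u`, which is `p`-harmonic where it is positive,
with a nonnegative weak supersolution `h` in a bounded open set. -/
lemma comparison [Nontrivial (EuD N)] {p : ℝ} (hp : 1 < p) {u : EuD N → ℝ} {L : ℝ≥0}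
    (hLip : LipschitzWith L u) (hharm : pHarmonicOn p {x | 0 < u x} u)
    {D : Set (EuD N)} (hDo : IsOpen D) (hDb : Bornology.IsBounded D)
    {h : EuD N → ℝ} (hh : ContDiff ℝ 1 h) (hh0 : ∀ x ∈ D, 0 ≤ h x)
    (hsup : ∀ φ, TestOn D φ → (∀ x, 0 ≤ φ x) →
      0 ≤ ∫ x, fderiv ℝ φ x (pflux p (gradient h x)))
    (hbd : ∀ x ∈ frontier D, u x ≤ h x) : ∀ x ∈ D, u x ≤ h x := by
  intro x₀ hx₀
  by_contra! hlt
  set η : ℝ := (u x₀ - h x₀) / 2 with hη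
  have hηpos : 0 < η := by linarith
  have hhd : Differentiable ℝ h := hh.differentiable one_ne_zero
  -- a global Lipschitz function agreeing with `u - h` on a ball containing the closure of `D`
  obtain ⟨R, hR⟩ := hDb.closure.subset_closedBall 0
  obtain ⟨C₁, hC₁⟩ : ∃ C₁ : ℝ≥0, LipschitzOnWith C₁ h (closedBall 0 R) := by
    have hcont : Continuous fun x => ‖fderiv ℝ h x‖₊ := (hh.continuous_fderiv one_ne_zero).nnnorm
    obtain ⟨C₁, hC₁⟩ := (isCompact_closedBall (0 : EuD N) R).bddAbove_image hcont.continuousOn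
    exact ⟨C₁, (convex_closedBall _ _).lipschitzOnWith_of_nnnorm_fderiv_le
      (fun x _ => hhd x) fun x hx => hC₁ (mem_image_of_mem _ hx)⟩
  obtain ⟨g, hg, hgf⟩ := (hLip.lipschitzOnWith.sub hC₁).extend_real
  set C := L + C₁
  set ψ : EuD N → ℝ := D.indicator fun x => max (g x - η) 0 with hψdef
  have hψL : LipschitzWith C ψ := by
    refine lipschitz_indicator_max (g := fun x => g x - η)
      (LipschitzWith.of_dist_le_mul fun x y => ?_) hDo fun x hx => ?_
    · rw [dist_sub_right]; exact hg.dist_le_mul x y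
    · have h1 := hgf (hR (frontier_subset_closure hx))
      have h2 := hbd x hx
      simp only at h1
      linarith
  have hψ0 : ∀ x, 0 ≤ ψ x := fun x => indicator_nonneg (fun x _ => le_max_right _ _) x
  set S : Set (EuD N) := closure D ∩ {x | η ≤ u x - h x} with hS
  have hSc : IsClosed S := isClosed_closure.inter
    (isClosed_le continuous_const (hLip.continuous.sub hh.continuous))
  have hScomp : IsCompact S := hDb.isCompact_closure.of_isClosed_subset hSc inter_subset_left
  have hsuppS : tsupport ψ ⊆ S := by
    refine closure_minimal (fun x hx => ?_) hSc
    have hxD : x ∈ D := by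
      by_contra hxD
      exact hx (indicator_of_notMem hxD _)
    refine ⟨subset_closure hxD, ?_⟩
    by_contra hlt
    refine hx ?_
    have h1 := hgf (hR (subset_closure hxD))
    simp only [mem_ofPred_eq, not_le] at h1 hlt
    rw [hψdef, indicator_of_mem hxD, max_eq_right (by linarith)]
  have hSD : S ⊆ D := by
    rintro x ⟨hx1, hx2⟩
    by_contra hxD
    have := hbd x ⟨hx1, by rwa [hDo.interior_eq]⟩
    simp only [mem_ofPred_eq] at hx2
    linarith
  have hSU : S ⊆ D ∩ {x | 0 < u x} := fun x hx => ⟨hSD hx, by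
    have h1 := hh0 x (hSD hx)
    have h2 : η ≤ u x - h x := hx.2
    simp only [mem_ofPred_eq]
    linarith⟩
  have hcψ : HasCompactSupport ψ := hScomp.of_isClosed_subset (isClosed_tsupport _) hsuppS
  obtain ⟨φ, hφ, hφC, ⟨K, hK, hφK⟩, hφlim, hφz⟩ := exists_test_approx hψL hcψ hψ0
    (hDo.inter (isOpen_lt continuous_const hLip.continuous)) (hsuppS.trans hSU)
  -- the derivative of `ψ` is that of `u - h` where `ψ > 0`, and vanishes elsewhere
  have hder0 : ∀ x, ψ x = 0 → fderiv ℝ ψ x = 0 := fun x hx =>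
    IsLocalMin.fderiv_eq_zero (Eventually.of_forall fun y => by rw [hx]; exact hψ0 y)
  have hder1 : ∀ᵐ x, ψ x ≠ 0 → fderiv ℝ ψ x = fderiv ℝ u x - fderiv ℝ h x := by
    filter_upwards [hLip.ae_differentiableAt (μ := volume)] with x hxd hx
    have hxD : x ∈ D := hSD (hsuppS (subset_tsupport _ hx))
    have hev : ∀ᶠ y in 𝓝 x, ψ y = u y - h y - η := by
      have h1 : ∀ᶠ y in 𝓝 x, ψ y ≠ 0 := hψL.continuous.continuousAt.eventually_ne hx
      filter_upwards [h1, hDo.mem_nhds hxD] with y hy hyD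
      have h1 := hgf (hR (subset_closure hyD))
      simp only at h1
      rw [hψdef, indicator_of_mem hyD, ← h1] at hy
      rw [hψdef, indicator_of_mem hyD, ← h1]
      rcases max_choice (u y - h y - η) 0 with h2 | h2
      · exact h2
      · exact absurd h2 hy
    rw [Filter.EventuallyEq.fderiv_eq hev]
    exact ((hxd.hasFDerivAt.sub (hhd x).hasFDerivAt).sub_const η).fderiv
  set G : EuD N → EuD N := fun x => pflux p (gradient u x) - pflux p (gradient h x) with hG
  have hGm : Measurable G := ((measurable_pflux p).comp (measurable_gradient u)).sub
    ((measurable_pflux p).comp (measurable_gradient h))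
  obtain ⟨M, hM⟩ : ∃ M, ∀ x ∈ K, ‖fderiv ℝ h x‖ ≤ M :=
    hK.exists_bound_of_continuousOn (hh.continuous_fderiv one_ne_zero).continuousOn
  have hu1 : ∀ x, ‖pflux p (gradient u x)‖ ≤ (L : ℝ) ^ (p - 1) := fun x => by
    rw [norm_pflux hp, norm_gradient]
    exact Real.rpow_le_rpow (norm_nonneg _) (norm_fderiv_le_of_lipschitz ℝ hLip) (by linarith)
  have hh1 : ∀ x ∈ K, ‖pflux p (gradient h x)‖ ≤ M ^ (p - 1) := fun x hx => by
    rw [norm_pflux hp, norm_gradient]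
    exact Real.rpow_le_rpow (norm_nonneg _) (hM x hx) (by linarith)
  have hKi : ∀ c : ℝ, Integrable (K.indicator fun _ => c) (volume : Measure (EuD N)) := fun c =>
    (integrable_indicator_iff hK.measurableSet).2 (integrableOn_const hK.measure_lt_top.ne)
  have hmeas : ∀ (f : EuD N → ℝ) (V : EuD N → EuD N), Measurable V →
      AEStronglyMeasurable (fun x => fderiv ℝ f x (V x)) volume := fun f V hV =>
    ((isBoundedBilinearMap_apply (𝕜 := ℝ) (E := EuD N) (F := ℝ)).continuous.measurable.comp
      ((measurable_fderiv ℝ f).prodMk hV)).aestronglyMeasurable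
  have hbound : ∀ (V : EuD N → EuD N) (c : ℝ), (∀ x ∈ K, ‖V x‖ ≤ c) → ∀ n x,
      ‖fderiv ℝ (φ n) x (V x)‖ ≤ K.indicator (fun _ => C * c) x := by
    intro V c hV n x
    by_cases hx : x ∈ K
    · rw [indicator_of_mem hx]
      exact ((fderiv ℝ (φ n) x).le_opNorm _).trans
        (mul_le_mul (hφC n x) (hV x hx) (norm_nonneg _) C.coe_nonneg)
    · rw [indicator_of_notMem hx, hφK n x hx]
      simp
  have hGb : ∀ x ∈ K, ‖G x‖ ≤ (L : ℝ) ^ (p - 1) + M ^ (p - 1) := fun x hx =>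
    (norm_sub_le _ _).trans (add_le_add (hu1 x) (hh1 x hx))
  have hlim : ∀ᵐ x, Tendsto (fun n => fderiv ℝ (φ n) x (G x)) atTop
      (𝓝 (fderiv ℝ ψ x (G x))) := by
    filter_upwards [hφlim] with x hx
    exact ((ContinuousLinearMap.apply ℝ ℝ (G x)).continuous.tendsto _).comp hx
  have hT := tendsto_integral_of_dominated_convergence _
    (fun n => hmeas (φ n) G hGm) (hKi _)
    (fun n => Eventually.of_forall (hbound G _ hGb n)) hlim
  have hneg : ∀ n, ∫ x, fderiv ℝ (φ n) x (G x) ≤ 0 := by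
    intro n
    have i1 : Integrable (fun x => fderiv ℝ (φ n) x (pflux p (gradient u x))) volume :=
      (hKi _).mono' (hmeas (φ n) _ ((measurable_pflux p).comp (measurable_gradient u)))
        (Eventually.of_forall (hbound _ _ (fun x _ => hu1 x) n))
    have i2 : Integrable (fun x => fderiv ℝ (φ n) x (pflux p (gradient h x))) volume :=
      (hKi _).mono' (hmeas (φ n) _ ((measurable_pflux p).comp (measurable_gradient h)))
        (Eventually.of_forall (hbound _ _ hh1 n))
    obtain ⟨⟨ht1, ht2, ht3⟩, hnn⟩ := hφ n
    have e1 : ∫ x, fderiv ℝ (φ n) x (pflux p (gradient u x)) = 0 := by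
      rw [← hharm (φ n) ⟨ht1, ht2, ht3.trans inter_subset_right⟩, pLap]
      refine integral_congr_ae (Eventually.of_forall fun x => ?_)
      simp only [inner_gradient_right, pflux, map_smul, smul_eq_mul, conj_trivial]
    have e2 := hsup (φ n) ⟨ht1, ht2, ht3.trans inter_subset_left⟩ hnn
    simp only [hG, map_sub]
    rw [integral_sub i1 i2, e1]
    linarith
  have hle : ∫ x, fderiv ℝ ψ x (G x) ≤ 0 := le_of_tendsto' hT hneg
  have hGψ : ∀ᵐ x, ψ x ≠ 0 → fderiv ℝ ψ x (G x) = ⟪G x, gradient u x - gradient h x⟫ := by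
    filter_upwards [hder1] with x hx hne
    rw [hx hne, inner_sub_right, inner_gradient_right, inner_gradient_right]
    simp
  have hnn : 0 ≤ᵐ[volume] fun x => fderiv ℝ ψ x (G x) := by
    filter_upwards [hGψ] with x hx
    by_cases hne : ψ x = 0
    · simp [hder0 x hne]
    · rw [hx hne]
      exact pflux_monotone hp _ _
  have hint : Integrable (fun x => fderiv ℝ ψ x (G x)) volume := by
    refine (hKi (C * ((L : ℝ) ^ (p - 1) + M ^ (p - 1)))).mono' (hmeas ψ G hGm) ?_
    filter_upwards [hlim] with x hx
    exact le_of_tendsto' hx.norm fun n => hbound G _ hGb n x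
  have hzero := (integral_eq_zero_iff_of_nonneg_ae hnn hint).1
    (le_antisymm hle (integral_nonneg_of_ae hnn))
  have hψz := hφz (by
    filter_upwards [hzero, hGψ, hder1] with x h1 h2 h3
    by_cases hne : ψ x = 0
    · exact hder0 x hne
    · have h4 := pflux_strict hp ((h2 hne).symm.trans h1)
      rw [h3 hne, ← toDual_gradient, ← toDual_gradient, h4, sub_self]) x₀
  have h1 := hgf (hR (subset_closure hx₀))
  simp only at h1
  rw [hψdef, indicator_of_mem hx₀, ← h1, max_eq_left (by linarith)] at hψz
  linarith

/-! ### Pointwise supersolutions -/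

lemma integrable_of_continuousOn_tsupport {F φ : EuD N → ℝ} {D : Set (EuD N)}
    (hF : ContinuousOn F D) (hφ : TestOn D φ) (h0 : ∀ x ∉ tsupport φ, F x = 0) :
    Integrable F volume :=
  (integrableOn_iff_integrable_of_support_subset fun x hx => by
    by_contra h
    exact hx (h0 x h)).1 ((hF.mono hφ.2.2).integrableOn_compact hφ.2.1)

lemma pflux_eq_sq (p : ℝ) (a : EuD N) : pflux p a = (‖a‖ ^ 2) ^ ((p - 2) / 2) • a := by
  rw [pflux, ← Real.rpow_natCast_mul (norm_nonneg a)]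
  congr 2
  push_cast
  ring

/-- The divergence of `|ξ|^{p-2} ξ` at a point where `ξ` does not vanish, in nondivergence form:
`|ξ|^{p-4} (|ξ|^2 tr H + (p-2) ⟪ξ, H ξ⟫)` with `H` the derivative of `ξ`. -/
lemma pflux_comp_hasFDerivAt (p : ℝ) {ξ : EuD N → EuD N} {x : EuD N}
    {H : EuD N →L[ℝ] EuD N} (hξ : HasFDerivAt ξ H x) (h0 : ξ x ≠ 0) :
    ∃ W : EuD N →L[ℝ] EuD N, HasFDerivAt (fun y => pflux p (ξ y)) W x ∧
      ∑ i, ⟪EuclideanSpace.basisFun (Fin N) ℝ i, W (EuclideanSpace.basisFun (Fin N) ℝ i)⟫ =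
        (‖ξ x‖ ^ 2) ^ ((p - 2) / 2 - 1) *
          (‖ξ x‖ ^ 2 * (∑ i, ⟪EuclideanSpace.basisFun (Fin N) ℝ i,
              H (EuclideanSpace.basisFun (Fin N) ℝ i)⟫) + (p - 2) * ⟪ξ x, H (ξ x)⟫) := by
  have hpos : 0 < ‖ξ x‖ ^ 2 := by positivity
  have h1 := (hξ.norm_sq.rpow_const (p := (p - 2) / 2) (Or.inl hpos.ne')).smul hξ
  simp only [pflux_eq_sq]
  refine ⟨_, h1, ?_⟩
  have h2 : ∀ i, ⟪EuclideanSpace.basisFun (Fin N) ℝ i, ξ x⟫ *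
      ⟪ξ x, H (EuclideanSpace.basisFun (Fin N) ℝ i)⟫ =
      ⟪ξ x, H (⟪EuclideanSpace.basisFun (Fin N) ℝ i, ξ x⟫ •
        EuclideanSpace.basisFun (Fin N) ℝ i)⟫ := fun i => by
    rw [map_smul, real_inner_smul_right]
  have h3 : ∑ i, ⟪EuclideanSpace.basisFun (Fin N) ℝ i, ξ x⟫ *
      ⟪ξ x, H (EuclideanSpace.basisFun (Fin N) ℝ i)⟫ = ⟪ξ x, H (ξ x)⟫ := by
    simp_rw [h2]
    rw [← inner_sum, ← map_sum, OrthonormalBasis.sum_repr']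
  have h4 : (‖ξ x‖ ^ 2) ^ ((p - 2) / 2) = (‖ξ x‖ ^ 2) ^ ((p - 2) / 2 - 1) * ‖ξ x‖ ^ 2 := by
    rw [← Real.rpow_add_one hpos.ne']
    congr 1
    ring
  calc _ = ∑ i, ((‖ξ x‖ ^ 2) ^ ((p - 2) / 2) * ⟪EuclideanSpace.basisFun (Fin N) ℝ i,
              H (EuclideanSpace.basisFun (Fin N) ℝ i)⟫ +
            (p - 2) * (‖ξ x‖ ^ 2) ^ ((p - 2) / 2 - 1) *
              (⟪EuclideanSpace.basisFun (Fin N) ℝ i, ξ x⟫ *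
                ⟪ξ x, H (EuclideanSpace.basisFun (Fin N) ℝ i)⟫)) := by
        refine Finset.sum_congr rfl fun i _ => ?_
        simp [inner_add_right, real_inner_smul_right]
        ring
    _ = _ := by
        rw [Finset.sum_add_distrib, ← Finset.mul_sum, ← Finset.mul_sum, h3, h4]
        ring

/-- A nonvanishing `C^1` vector field `ξ` satisfying the nondivergence form of the inequality
`div (|ξ|^{p-2} ξ) ≤ 0` satisfies the weak one, by integration by parts. -/
lemma weak_super_of_pointwise (p : ℝ) {ξ : EuD N → EuD N} (hξ : ContDiff ℝ 1 ξ)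
    {D : Set (EuD N)} (hD : IsOpen D) (h0 : ∀ x ∈ D, ξ x ≠ 0)
    (hineq : ∀ x ∈ D, ‖ξ x‖ ^ 2 * (∑ i, ⟪EuclideanSpace.basisFun (Fin N) ℝ i,
      fderiv ℝ ξ x (EuclideanSpace.basisFun (Fin N) ℝ i)⟫) +
        (p - 2) * ⟪ξ x, fderiv ℝ ξ x (ξ x)⟫ ≤ 0)
    {φ : EuD N → ℝ} (hφ : TestOn D φ) (hφ0 : ∀ x, 0 ≤ φ x) :
    0 ≤ ∫ x, fderiv ℝ φ x (pflux p (ξ x)) := by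
  set b := EuclideanSpace.basisFun (Fin N) ℝ with hb
  set V : EuD N → EuD N := fun x => pflux p (ξ x) with hV
  have hVd : ContDiffOn ℝ 1 V D := by
    simp only [hV, pflux_eq_sq]
    have h1 : ContDiffOn ℝ 1 (fun x => (‖ξ x‖ ^ 2) ^ ((p - 2) / 2)) D := fun x hx =>
      ((hξ.norm_sq ℝ).contDiffAt.rpow_const_of_ne (by
        have := h0 x hx
        positivity)).contDiffWithinAt
    exact h1.smul hξ.contDiffOn
  have hVdiff : ∀ x ∈ D, HasFDerivAt V (fderiv ℝ V x) x := fun x hx =>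
    ((hVd.differentiableOn one_ne_zero).differentiableAt (hD.mem_nhds hx)).hasFDerivAt
  have hφd : Differentiable ℝ φ := hφ.1.differentiable (by simp)
  have hφc : ∀ i, Continuous fun x => fderiv ℝ φ x (b i) := fun i =>
    (hφ.1.continuous_fderiv (by simp)).clm_apply continuous_const
  have hVc : ∀ i, ContinuousOn (fun x => ⟪b i, V x⟫) D := fun i =>
    continuousOn_const.inner hVd.continuousOn
  have hV'c : ∀ i, ContinuousOn (fun x => ⟪b i, fderiv ℝ V x (b i)⟫) D := fun i =>
    continuousOn_const.inner
      ((hVd.continuousOn_fderiv_of_isOpen hD le_rfl).clm_apply continuousOn_const)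
  have i1 : ∀ i, Integrable (fun x => ⟪b i, fderiv ℝ V x (b i)⟫ * φ x) volume := fun i =>
    integrable_of_continuousOn_tsupport ((hV'c i).mul hφ.1.continuous.continuousOn) hφ
      fun x hx => by rw [image_eq_zero_of_notMem_tsupport hx, mul_zero]
  have i2 : ∀ i, Integrable (fun x => ⟪b i, V x⟫ * fderiv ℝ φ x (b i)) volume := fun i =>
    integrable_of_continuousOn_tsupport ((hVc i).mul (hφc i).continuousOn) hφ
      fun x hx => by rw [fderiv_of_notMem_tsupport ℝ hx]; simp
  have i3 : ∀ i, Integrable (fun x => ⟪b i, V x⟫ * φ x) volume := fun i =>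
    integrable_of_continuousOn_tsupport ((hVc i).mul hφ.1.continuous.continuousOn) hφ
      fun x hx => by rw [image_eq_zero_of_notMem_tsupport hx, mul_zero]
  have parts : ∀ i, ∫ x, ⟪b i, V x⟫ * fderiv ℝ φ x (b i) =
      - ∫ x, ⟪b i, fderiv ℝ V x (b i)⟫ * φ x := fun i =>
    integral_bilinear_hasLineDerivAt_right_eq_neg_left_of_integrable (μ := volume) (v := b i)
      (B := ContinuousLinearMap.mul ℝ ℝ) (f := fun x => ⟪b i, V x⟫) (g := φ)
      (i1 i) (i2 i) (i3 i)
      (fun x hx => by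
        have h := ((innerSL ℝ (b i)).hasFDerivAt.comp x (hVdiff x (hφ.2.2 hx))).hasLineDerivAt
          (b i)
        exact h)
      (fun x _ => (hφd x).hasFDerivAt.hasLineDerivAt (b i))
  have expand : ∀ x, fderiv ℝ φ x (V x) = ∑ i, ⟪b i, V x⟫ * fderiv ℝ φ x (b i) := fun x => by
    conv_lhs => rw [← b.sum_repr' (V x)]
    simp
  simp only [hV] at expand ⊢
  simp_rw [expand]
  rw [integral_finsetSum _ fun i _ => i2 i, Finset.sum_congr rfl fun i _ => parts i,
    Finset.sum_neg_distrib, ← integral_finsetSum _ fun i _ => i1 i, neg_nonneg]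
  refine integral_nonpos fun x => ?_
  simp only [Pi.zero_apply]
  rw [← Finset.sum_mul]
  by_cases hx : x ∈ tsupport φ
  · have hxD := hφ.2.2 hx
    obtain ⟨W, hW, hWs⟩ := pflux_comp_hasFDerivAt p
      (hξ.differentiable one_ne_zero x).hasFDerivAt (h0 x hxD)
    rw [hW.fderiv]
    refine mul_nonpos_of_nonpos_of_nonneg ?_ (hφ0 x)
    rw [hb, hWs]
    exact mul_nonpos_of_nonneg_of_nonpos (by positivity) (hineq x hxD)
  · rw [image_eq_zero_of_notMem_tsupport hx, mul_zero]

/-! ### The exponential barrier -/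

/-- Norm bound for the projection onto the hyperplane `⟪e, ·⟫ = 0` along `z`. -/
lemma norm_oblique_proj_le {e z : EuD N} (he : ‖e‖ = 1) {δ R : ℝ} (hδ : 0 < δ) (hR : 0 < R)
    (hzR : ‖z‖ ≤ R) (hzδ : δ * R ≤ ⟪e, z⟫) (y : EuD N) :
    ‖y - (⟪e, y⟫ / ⟪e, z⟫) • z‖ ≤ (1 + 1 / δ) * ‖y‖ := by
  have hs0 : 0 < ⟪e, z⟫ := lt_of_lt_of_le (by positivity) hzδ
  refine (norm_sub_le _ _).trans ?_
  rw [norm_smul, Real.norm_eq_abs, abs_div, abs_of_pos hs0]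
  have h1 : |⟪e, y⟫| ≤ ‖y‖ := by simpa [he] using abs_real_inner_le_norm e y
  have h2 : |⟪e, y⟫| / ⟪e, z⟫ * ‖z‖ ≤ ‖y‖ / (δ * R) * R := by gcongr
  have h3 : ‖y‖ / (δ * R) * R = 1 / δ * ‖y‖ := by field_simp
  linarith

/-- Pointwise supersolution inequality for the barrier, whose gradient has derivative
`H = -c (K g ⊗ g - 2 m Pᵀ P)`, a nonpositive multiple of the Hessian of `exp (K q)`: the
rank-one part of that Hessian dominates its bounded negative part in every direction `ξ` once
`K` is large. -/
lemma barrier_ineq {p : ℝ} (g ξ : EuD N) (P H : EuD N →L[ℝ] EuD N) {K m c B : ℝ}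
    (hK : 0 ≤ K) (hm : 0 ≤ m) (hc : 0 ≤ c) (hP : ∀ y, ‖P y‖ ≤ B * ‖y‖)
    (hH : ∀ y, H y = -(c • ((K * ⟪g, y⟫) • g - (2 * m) • (P.adjoint (P y)))))
    (hKm : 2 * m * ((N + |p - 2|) * B ^ 2) ≤ K * (min 1 (p - 1) * ‖g‖ ^ 2)) :
    ‖ξ‖ ^ 2 * (∑ i, ⟪EuclideanSpace.basisFun (Fin N) ℝ i,
      H (EuclideanSpace.basisFun (Fin N) ℝ i)⟫) + (p - 2) * ⟪ξ, H ξ⟫ ≤ 0 := by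
  set b := EuclideanSpace.basisFun (Fin N) ℝ with hb
  have hquad : ∀ y, ⟪y, H y⟫ = -(c * (K * ⟪g, y⟫ ^ 2 - 2 * m * ‖P y‖ ^ 2)) := fun y => by
    rw [hH, inner_neg_right, real_inner_smul_right, inner_sub_right, real_inner_smul_right,
      real_inner_smul_right, ContinuousLinearMap.adjoint_inner_right, real_inner_self_eq_norm_sq,
      real_inner_comm y g]
    ring
  have hsum : ∑ i, ⟪b i, H (b i)⟫ = -(c * (K * ‖g‖ ^ 2 - 2 * m * ∑ i, ‖P (b i)‖ ^ 2)) := by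
    simp_rw [hquad]
    rw [Finset.sum_neg_distrib, ← Finset.mul_sum, Finset.sum_sub_distrib, ← Finset.mul_sum,
      ← Finset.mul_sum, b.sum_sq_inner_left]
  have hPsq : ∀ y, ‖P y‖ ^ 2 ≤ B ^ 2 * ‖y‖ ^ 2 := fun y => by
    rw [← mul_pow]
    exact pow_le_pow_left₀ (norm_nonneg _) (hP y) 2
  have htr : ∑ i, ‖P (b i)‖ ^ 2 ≤ N * B ^ 2 := by
    calc _ ≤ ∑ _i : Fin N, B ^ 2 := Finset.sum_le_sum fun i _ => by
          simpa using hPsq (b i)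
      _ = _ := by simp
  have hcs : ⟪g, ξ⟫ ^ 2 ≤ ‖g‖ ^ 2 * ‖ξ‖ ^ 2 := by
    rw [← mul_pow]
    exact sq_le_sq' (by linarith [neg_le_of_abs_le (abs_real_inner_le_norm g ξ)])
      (real_inner_le_norm g ξ)
  have h1 : min 1 (p - 1) * (‖g‖ ^ 2 * ‖ξ‖ ^ 2) ≤
      ‖g‖ ^ 2 * ‖ξ‖ ^ 2 + (p - 2) * ⟪g, ξ⟫ ^ 2 := by
    rcases le_total 1 (p - 1) with h | h
    · rw [min_eq_left h]
      have : 0 ≤ (p - 2) * ⟪g, ξ⟫ ^ 2 := mul_nonneg (by linarith) (sq_nonneg _)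
      linarith
    · rw [min_eq_right h]
      nlinarith
  have h2 : (∑ i, ‖P (b i)‖ ^ 2) * ‖ξ‖ ^ 2 + (p - 2) * ‖P ξ‖ ^ 2 ≤
      (N + |p - 2|) * B ^ 2 * ‖ξ‖ ^ 2 := by
    have h3 := mul_le_mul_of_nonneg_right htr (sq_nonneg ‖ξ‖)
    have h4 : (p - 2) * ‖P ξ‖ ^ 2 ≤ |p - 2| * (B ^ 2 * ‖ξ‖ ^ 2) :=
      mul_le_mul (le_abs_self _) (hPsq ξ) (sq_nonneg _) (abs_nonneg _)
    linarith
  have h5 := mul_le_mul_of_nonneg_left h1 hK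
  have h6 := mul_le_mul_of_nonneg_left h2 (by linarith : 0 ≤ 2 * m)
  have h7 := mul_le_mul_of_nonneg_right hKm (sq_nonneg ‖ξ‖)
  rw [hsum, hquad]
  have h8 : 0 ≤ c * (K * (‖g‖ ^ 2 * ‖ξ‖ ^ 2 + (p - 2) * ⟪g, ξ⟫ ^ 2) -
      2 * m * ((∑ i, ‖P (b i)‖ ^ 2) * ‖ξ‖ ^ 2 + (p - 2) * ‖P ξ‖ ^ 2)) :=
    mul_nonneg hc (by linarith)
  linarith

set_option maxHeartbeats 1600000 in
/-- If `u ≤ a ⟪e, ·⟫` in the upper half-space and `u` vanishes at a point `z` whose height is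
comparable with `R`, then the barrier in the paraboloid with vertex `0` and axis through `z`
improves the bound there. -/
lemma barrier_bound [Nontrivial (EuD N)] {p : ℝ} (hp : 1 < p) {u : EuD N → ℝ} {L : ℝ≥0}
    (hLip : LipschitzWith L u) (hharm : pHarmonicOn p {x | 0 < u x} u)
    {e : EuD N} (he : ‖e‖ = 1) {a δ R ρ K : ℝ} (ha : 0 < a) (hδ : 0 < δ) (hR : 0 < R)
    (hu : ∀ x, 0 ≤ ⟪e, x⟫ → u x ≤ a * ⟪e, x⟫)
    {z : EuD N} (hzR : ‖z‖ ≤ R) (hzδ : δ * R ≤ ⟪e, z⟫) (hz : u z = 0)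
    (hρ : 0 < ρ) (hρL : L * ρ ≤ a * δ / 2) (hK1 : 0 < K)
    (hK : 2 * ((N + |p - 2|) * (1 + 1 / δ) ^ 2) ≤ K * min 1 (p - 1) * ρ ^ 2) {x : EuD N}
    (hx1 : ⟪e, x⟫ / ⟪e, z⟫ < 1)
    (hx2 : 0 < ⟪e, x⟫ / ⟪e, z⟫ - 1 / (ρ * R) ^ 2 * ‖x - (⟪e, x⟫ / ⟪e, z⟫) • z‖ ^ 2) :
    u x ≤ a * ⟪e, x⟫ - a * δ * R / (2 * Real.exp K) *
      (⟪e, x⟫ / ⟪e, z⟫ - 1 / (ρ * R) ^ 2 * ‖x - (⟪e, x⟫ / ⟪e, z⟫) • z‖ ^ 2) := by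
  set s := ⟪e, z⟫ with hs
  have hs0 : 0 < s := lt_of_lt_of_le (by positivity) hzδ
  set m := 1 / (ρ * R) ^ 2 with hm
  have hm0 : 0 < m := by positivity
  set τ : EuD N →L[ℝ] ℝ := s⁻¹ • innerSL ℝ e with hτ
  have hτa : ∀ y, τ y = ⟪e, y⟫ / s := fun y => by simp [hτ, div_eq_inv_mul]
  set P : EuD N →L[ℝ] EuD N := ContinuousLinearMap.id ℝ (EuD N) - τ.smulRight z with hP
  have hPa : ∀ y, P y = y - (⟪e, y⟫ / s) • z := fun y => by simp [hP, hτa]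
  have hPz : P z = 0 := by rw [hPa, ← hs, div_self hs0.ne', one_smul, sub_self]
  have hPB : ∀ y, ‖P y‖ ≤ (1 + 1 / δ) * ‖y‖ := fun y => by
    rw [hPa]
    exact norm_oblique_proj_le he hδ hR hzR hzδ y
  set q : EuD N → ℝ := fun y => τ y - m * ‖P y‖ ^ 2 with hq
  have hqτ : ∀ y, q y ≤ τ y := fun y => by
    simp only [hq]
    have : 0 ≤ m * ‖P y‖ ^ 2 := by positivity
    linarith
  have heτ : ∀ y, ⟪e, y⟫ = s * τ y := fun y => by rw [hτa]; field_simp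
  set g : EuD N → EuD N := fun y => s⁻¹ • e - (2 * m) • P.adjoint (P y) with hg
  set ε := a * δ * R / (2 * K * Real.exp K) with hε
  have hε0 : 0 < ε := by positivity
  have hεK : ε * K * Real.exp K = a * δ * R / 2 := by rw [hε]; field_simp
  set h : EuD N → ℝ := fun y => a * ⟪e, y⟫ - ε * (Real.exp (K * q y) - 1) with hh
  set ξ : EuD N → EuD N := fun y => a • e - (ε * K * Real.exp (K * q y)) • g y with hξ
  have hqs : ContDiff ℝ 1 q := τ.contDiff.sub (contDiff_const.mul (P.contDiff.norm_sq ℝ))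
  have hqd : ∀ y, HasFDerivAt q (innerSL ℝ (g y)) y := fun y => by
    have h1 := (τ.hasFDerivAt (x := y)).sub ((P.hasFDerivAt (x := y)).norm_sq.const_mul m)
    refine h1.congr_fderiv ?_
    ext v
    simp [hg, hτ, ContinuousLinearMap.adjoint_inner_left]
    ring
  have hhd : ∀ y, HasGradientAt h (ξ y) y := fun y => by
    have h1 := (((innerSL ℝ e).hasFDerivAt (x := y)).const_mul a).sub
      ((((hqd y).const_mul K).exp.sub_const 1).const_mul ε)
    rw [hasGradientAt_iff_hasFDerivAt]
    refine h1.congr_fderiv ?_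
    ext v
    simp [hξ]
    ring
  have hhs : ContDiff ℝ 1 h := ((contDiff_const.mul (contDiff_const.inner ℝ contDiff_id)).sub
    (contDiff_const.mul ((Real.contDiff_exp.comp (contDiff_const.mul hqs)).sub contDiff_const)))
  have hgs : ContDiff ℝ 1 g := contDiff_const.sub
    ((P.adjoint.contDiff.comp P.contDiff).const_smul (2 * m))
  have hξs : ContDiff ℝ 1 ξ := contDiff_const.sub
    ((contDiff_const.mul (Real.contDiff_exp.comp (contDiff_const.mul hqs))).smul hgs)
  have hξd : ∀ y v, fderiv ℝ ξ y v = -((ε * K * Real.exp (K * q y)) •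
      ((K * ⟪g y, v⟫) • g y - (2 * m) • (P.adjoint (P v)))) := fun y v => by
    have h1 : HasFDerivAt g (-((2 * m) • (P.adjoint.comp P))) y :=
      (((P.adjoint.comp P).hasFDerivAt (x := y)).const_smul (2 * m)).const_sub _
    have h2 := ((((hqd y).const_mul K).exp.const_mul (ε * K)).smul h1).const_sub (a • e)
    have h3 : fderiv ℝ ξ y = _ := h2.fderiv
    rw [h3]
    simp only [neg_apply, add_apply, smul_apply, ContinuousLinearMap.smulRight_apply,
      ContinuousLinearMap.comp_apply, innerSL_apply_apply, smul_eq_mul]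
    module
  set D : Set (EuD N) := {y | τ y < 1} ∩ {y | 0 < q y} with hD
  have hDo : IsOpen D := (isOpen_lt τ.continuous continuous_const).inter
    (isOpen_lt continuous_const hqs.continuous)
  have hPsq : ∀ y, 0 ≤ q y → τ y ≤ 1 → ‖P y‖ ^ 2 ≤ (ρ * R) ^ 2 := fun y h1 h2 => by
    simp only [hq] at h1
    have h3 : m * ‖P y‖ ^ 2 ≤ 1 := by linarith
    rwa [hm, one_div, inv_mul_le_iff₀ (by positivity), mul_one] at h3
  have hDb : Bornology.IsBounded D := by
    refine (isBounded_closedBall (x := (0 : EuD N)) (r := ρ * R + R)).subset fun y hy => ?_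
    have h1 := abs_le_of_sq_le_sq (hPsq y hy.2.le hy.1.le) (by positivity)
    rw [abs_of_nonneg (norm_nonneg _)] at h1
    have h2 : y = P y + τ y • z := by rw [hPa, hτa]; abel
    have h3 : |τ y| ≤ 1 := by
      rw [abs_of_nonneg (hy.2.le.trans (hqτ y))]
      exact hy.1.le
    rw [mem_closedBall_zero_iff, h2]
    refine (norm_add_le _ _).trans (add_le_add h1 ?_)
    rw [norm_smul, Real.norm_eq_abs]
    calc |τ y| * ‖z‖ ≤ 1 * R := by gcongr
      _ = R := one_mul R
  have hexp : ∀ y, 0 ≤ q y → q y ≤ 1 → ε * (Real.exp (K * q y) - 1) ≤ a * δ * R / 2 * q y := by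
    intro y h1 h2
    have h3 : 1 - K * q y ≤ Real.exp (-(K * q y)) := by
      linarith [Real.add_one_le_exp (-(K * q y))]
    have h4 : Real.exp (K * q y) * Real.exp (-(K * q y)) = 1 := by
      rw [← Real.exp_add, add_neg_cancel, Real.exp_zero]
    have h5 := mul_le_mul_of_nonneg_left h3 (Real.exp_pos (K * q y)).le
    have h6 : Real.exp (K * q y) ≤ Real.exp K := Real.exp_le_exp.2 (by nlinarith)
    have h7 : Real.exp (K * q y) - 1 ≤ Real.exp K * (K * q y) := by
      have := mul_le_mul_of_nonneg_right h6 (mul_nonneg hK1.le h1)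
      linarith
    calc _ ≤ ε * (Real.exp K * (K * q y)) := mul_le_mul_of_nonneg_left h7 hε0.le
      _ = ε * K * Real.exp K * q y := by ring
      _ = _ := by rw [hεK]
  have hgz : ∀ y, ⟪g y, z⟫ = 1 := fun y => by
    simp only [hg, inner_sub_left, real_inner_smul_left, ContinuousLinearMap.adjoint_inner_left,
      hPz, inner_zero_right, mul_zero, sub_zero]
    rw [← hs, inv_mul_cancel₀ hs0.ne']
  have hgn : ∀ y, 1 / R ^ 2 ≤ ‖g y‖ ^ 2 := fun y => by
    have h1 : 1 ≤ ‖g y‖ * R := (hgz y).symm.le.trans ((real_inner_le_norm _ _).trans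
      (mul_le_mul_of_nonneg_left hzR (norm_nonneg _)))
    rw [div_le_iff₀ (by positivity), ← mul_pow]
    exact one_le_pow₀ h1
  have hξ0 : ∀ y ∈ D, ξ y ≠ 0 := by
    intro y hy h0
    have h1 : ⟪ξ y, z⟫ = a * s - ε * K * Real.exp (K * q y) := by
      simp only [hξ, inner_sub_left, real_inner_smul_left, hgz, mul_one, ← hs]
    have h2 : Real.exp (K * q y) ≤ Real.exp K :=
      Real.exp_le_exp.2 (by nlinarith [(hqτ y).trans hy.1.le])
    have h3 := mul_le_mul_of_nonneg_left h2 (by positivity : 0 ≤ ε * K)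
    have h4 := mul_le_mul_of_nonneg_left hzδ ha.le
    have h5 : 0 < a * δ * R := by positivity
    rw [h0, inner_zero_left] at h1
    linarith
  have hKm : ∀ y, 2 * m * ((N + |p - 2|) * (1 + 1 / δ) ^ 2) ≤
      K * (min 1 (p - 1) * ‖g y‖ ^ 2) := fun y => by
    have hmin : 0 ≤ min 1 (p - 1) := le_min zero_le_one (by linarith)
    have h1 := mul_le_mul_of_nonneg_left (hgn y) (mul_nonneg hK1.le hmin)
    have h2 := mul_le_mul_of_nonneg_left hK hm0.le
    have h3 : m * (K * min 1 (p - 1) * ρ ^ 2) = K * min 1 (p - 1) * (1 / R ^ 2) := by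
      rw [hm]; field_simp
    linarith
  have hcomp := comparison hp hLip hharm hDo hDb hhs
    (fun y hy => by
      have h1 := hexp y hy.2.le ((hqτ y).trans hy.1.le)
      have h2 : a * δ * R / 2 * q y ≤ a * s * τ y := by
        have h3 : a * δ * R / 2 ≤ a * s := by nlinarith [mul_le_mul_of_nonneg_left hzδ ha.le]
        exact mul_le_mul h3 (hqτ y) hy.2.le (by positivity)
      simp only [hh, heτ]
      linarith)
    (fun φ hφ hφ0 => by
      simp_rw [fun y => (hhd y).gradient]
      exact weak_super_of_pointwise p hξs hDo hξ0
        (fun y _ => barrier_ineq (g y) (ξ y) P _ hK1.le hm0.le (by positivity) hPB (hξd y)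
          (hKm y)) hφ hφ0)
    (fun y hy => by
      have hcl : τ y ≤ 1 ∧ 0 ≤ q y := by
        have hsub : closure D ⊆ {y | τ y ≤ 1} ∩ {y | 0 ≤ q y} :=
          closure_minimal (fun w hw => by
            have h1 : τ w < 1 := hw.1
            have h2 : 0 < q w := hw.2
            simpa only [mem_inter_iff, mem_ofPred_eq] using And.intro h1.le h2.le)
            ((isClosed_le τ.continuous continuous_const).inter
              (isClosed_le continuous_const hqs.continuous))
        simpa only [mem_inter_iff, mem_ofPred_eq] using hsub (frontier_subset_closure hy)
      have hnD : y ∉ D := fun hyD => hy.2 (by rwa [hDo.interior_eq])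
      have hτ0 : 0 ≤ τ y := le_trans hcl.2 (hqτ y)
      rcases hcl.2.eq_or_lt with h0 | h0
      · -- the lateral boundary, where the barrier reduces to the linear bound
        have h1 := hu y (by rw [heτ]; positivity)
        simpa only [hh, ← h0, mul_zero, Real.exp_zero, sub_self, sub_zero] using h1
      · -- the top of the paraboloid, which lies close to the zero `z` of `u`
        have h1 : τ y = 1 := le_antisymm hcl.1 (not_lt.1 fun h => hnD ⟨h, h0⟩)
        have h2 := abs_le_of_sq_le_sq (hPsq y hcl.2 hcl.1) (by positivity)
        rw [abs_of_nonneg (norm_nonneg _), hPa, ← hτa, h1, one_smul] at h2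
        have h3 : u y ≤ L * (ρ * R) := by
          have h4 := (le_abs_self _).trans (hLip.dist_le_mul y z)
          rw [hz, sub_zero, dist_eq_norm] at h4
          exact h4.trans (mul_le_mul_of_nonneg_left h2 L.coe_nonneg)
        have h4 := mul_le_mul_of_nonneg_right hρL hR.le
        have h5 := hexp y hcl.2 ((hqτ y).trans hcl.1)
        have h6 : a * δ * R / 2 * q y ≤ a * δ * R / 2 * 1 :=
          mul_le_mul_of_nonneg_left ((hqτ y).trans hcl.1) (by positivity)
        have h7 := mul_le_mul_of_nonneg_left hzδ ha.le
        simp only [hh, heτ, h1]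
        linarith)
  have hqx : q x = ⟪e, x⟫ / s - m * ‖x - (⟪e, x⟫ / s) • z‖ ^ 2 := by
    simp only [hq, hPa, hτa]
  rw [← hqx] at hx2 ⊢
  have h1 := hcomp x ⟨by simpa only [mem_ofPred_eq, hτa] using hx1, hx2⟩
  have h2 : K * q x ≤ Real.exp (K * q x) - 1 := by linarith [Real.add_one_le_exp (K * q x)]
  have h3 := mul_le_mul_of_nonneg_left h2 hε0.le
  have h4 : ε * (K * q x) = a * δ * R / (2 * Real.exp K) * q x := by rw [hε]; field_simp
  simp only [hh] at h1
  linarith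

/-! ### Zeros at every scale and the improved slope -/

open scoped Pointwise in
/-- The density condition yields, at every scale `R`, a zero of `u` at height comparable
with `R`: thin slabs occupy a small proportion of the ball. -/
lemma exists_zero_at_scale {e : EuD N} (he : ‖e‖ = 1) {u : EuD N → ℝ} {lam : ℝ} (hlam : 0 < lam)
    (hneg : ∀ x, ⟪e, x⟫ < 0 → 0 < u x)
    (hdens : ∀ R : ℝ, 0 < R → lam * (volume (ball (0 : EuD N) R)).toReal <
        (volume ({x | u x = 0} ∩ ball (0 : EuD N) R)).toReal) :
    ∃ δ : ℝ, 0 < δ ∧ ∀ R : ℝ, 0 < R → ∃ z, ‖z‖ ≤ R ∧ δ * R ≤ ⟪e, z⟫ ∧ u z = 0 := by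
  set S : ℕ → Set (EuD N) := fun n =>
    ball 0 1 ∩ {x | 0 ≤ ⟪e, x⟫ ∧ ⟪e, x⟫ < 1 / ((n : ℝ) + 1)} with hS
  have hec : Continuous fun x : EuD N => ⟪e, x⟫ := continuous_const.inner continuous_id
  have hSm : ∀ n, MeasurableSet (S n) := fun n => measurableSet_ball.inter
    ((isClosed_le continuous_const hec).measurableSet.inter
      (isOpen_lt hec continuous_const).measurableSet)
  have hSfin : ∀ n, volume (S n) ≠ ∞ := fun n =>
    ((measure_mono inter_subset_left).trans_lt measure_ball_lt_top).ne
  have hSanti : Antitone S := fun i j hij x hx =>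
    ⟨hx.1, hx.2.1, hx.2.2.trans_le (one_div_le_one_div_of_le (by positivity) (by gcongr))⟩
  have hnull : volume (⋂ n, S n) = 0 := by
    refine measure_mono_null (t := ((innerSL ℝ e : EuD N →L[ℝ] ℝ).ker : Set (EuD N)))
      (fun x hx => ?_) (Measure.addHaar_submodule _ _ fun htop => ?_)
    · rw [mem_iInter] at hx
      have h1 : ⟪e, x⟫ ≤ 0 := ge_of_tendsto' tendsto_one_div_add_atTop_nhds_zero_nat
        fun n => (hx n).2.2.le
      simpa using le_antisymm h1 (hx 0).2.1
    · have : e ∈ (innerSL ℝ e : EuD N →L[ℝ] ℝ).ker := by rw [htop]; trivial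
      simp at this
      simp [this] at he
  have hlim := tendsto_measure_iInter_atTop (fun n => (hSm n).nullMeasurableSet) hSanti
    ⟨0, hSfin 0⟩
  rw [hnull] at hlim
  have hB : 0 < (volume (ball (0 : EuD N) 1)).toReal :=
    ENNReal.toReal_pos (measure_ball_pos volume 0 one_pos).ne' measure_ball_lt_top.ne
  obtain ⟨n, hn⟩ := (hlim.eventually_lt_const
    (ENNReal.ofReal_pos.2 (mul_pos hlam hB))).exists
  refine ⟨1 / ((n : ℝ) + 1), by positivity, fun R hR => ?_⟩
  by_contra! hno
  have hsub : {x | u x = 0} ∩ ball (0 : EuD N) R ⊆ R • S n := by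
    rintro x ⟨hx1, hx2⟩
    rw [mem_ofPred_eq] at hx1
    rw [mem_smul_set_iff_inv_smul_mem₀ hR.ne']
    rw [mem_ball_zero_iff] at hx2
    have h1 : 0 ≤ ⟪e, x⟫ := by
      by_contra! h
      exact (hneg x h).ne' hx1
    have h2 : ⟪e, x⟫ < 1 / ((n : ℝ) + 1) * R := by
      by_contra! h
      exact hno x hx2.le h hx1
    refine ⟨?_, ?_, ?_⟩
    · rw [mem_ball_zero_iff, norm_smul, norm_inv, Real.norm_of_nonneg hR.le,
        inv_mul_lt_iff₀ hR, mul_one]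
      exact hx2
    · rw [real_inner_smul_right]
      positivity
    · rw [real_inner_smul_right, inv_mul_lt_iff₀ hR, mul_comm]
      exact h2
  have hRN : 0 < R ^ Module.finrank ℝ (EuD N) := by positivity
  have h1 := hdens R hR
  rw [Measure.addHaar_ball_of_pos volume (0 : EuD N) hR, ENNReal.toReal_mul,
    ENNReal.toReal_ofReal hRN.le] at h1
  have h2 : (volume ({x | u x = 0} ∩ ball (0 : EuD N) R)).toReal ≤
      R ^ Module.finrank ℝ (EuD N) * (volume (S n)).toReal := by
    have h3 := Measure.addHaar_smul volume R (S n)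
    rw [abs_of_pos hRN] at h3
    rw [← ENNReal.toReal_ofReal hRN.le, ← ENNReal.toReal_mul, ← h3]
    refine ENNReal.toReal_mono ?_ (measure_mono hsub)
    rw [h3]
    exact ENNReal.mul_ne_top ENNReal.ofReal_ne_top (hSfin n)
  have h4 : (volume (S n)).toReal < lam * (volume (ball (0 : EuD N) 1)).toReal :=
    (ENNReal.lt_ofReal_iff_toReal_lt (hSfin n)).1 hn
  have h5 := mul_lt_mul_of_pos_left h4 hRN
  linarith

/-- The slope of a linear upper bound in the half-space can be strictly lowered. -/
lemma improve_slope [Nontrivial (EuD N)] {p : ℝ} (hp : 1 < p) {u : EuD N → ℝ} {L : ℝ≥0}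
    (hLip : LipschitzWith L u) (hharm : pHarmonicOn p {x | 0 < u x} u)
    {e : EuD N} (he : ‖e‖ = 1) {a δ : ℝ} (ha : 0 < a) (hδ : 0 < δ)
    (hu : ∀ x, 0 ≤ ⟪e, x⟫ → u x ≤ a * ⟪e, x⟫)
    (hz : ∀ R : ℝ, 0 < R → ∃ z, ‖z‖ ≤ R ∧ δ * R ≤ ⟪e, z⟫ ∧ u z = 0) :
    ∃ θ : ℝ, 0 < θ ∧ ∀ x, 0 < ⟪e, x⟫ → u x ≤ (a - θ) * ⟪e, x⟫ := by
  set ρ : ℝ := a * δ / (2 * (L + 1)) with hρdef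
  have hρ : 0 < ρ := by positivity
  have hρL : L * ρ ≤ a * δ / 2 := by
    have h1 : (L + 1) * ρ = a * δ / 2 := by rw [hρdef]; field_simp
    linarith
  have hmin : 0 < min 1 (p - 1) := lt_min one_pos (by linarith)
  set c := 2 * ((N + |p - 2|) * (1 + 1 / δ) ^ 2) with hc
  have hc0 : 0 ≤ c := by positivity
  set K := c / (min 1 (p - 1) * ρ ^ 2) + 1 with hKdef
  have hK0 : 0 < K := by positivity
  have hK : c ≤ K * min 1 (p - 1) * ρ ^ 2 := by
    have h1 : K * min 1 (p - 1) * ρ ^ 2 = c + min 1 (p - 1) * ρ ^ 2 := by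
      rw [hKdef]; field_simp
    rw [h1]
    have : 0 < min 1 (p - 1) * ρ ^ 2 := by positivity
    linarith
  refine ⟨a * δ / (4 * Real.exp K), by positivity, fun x hx => ?_⟩
  -- at scales large compared with `x`, the barrier is comparable with the height of `x`
  set b := 2 * ((1 + 1 / δ) * ‖x‖) ^ 2 / (ρ ^ 2 * ⟪e, x⟫) with hb
  have hb0 : 0 ≤ b := by positivity
  set R := ⟪e, x⟫ / δ + 1 + b with hRdef
  have hR : 0 < R := by positivity
  obtain ⟨z, hzR, hzδ, hz0⟩ := hz R hR
  have hs0 : 0 < ⟪e, z⟫ := lt_of_lt_of_le (by positivity) hzδ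
  have hsR : ⟪e, z⟫ ≤ R := by
    have := real_inner_le_norm e z
    rw [he, one_mul] at this
    linarith
  have h1 : ⟪e, x⟫ / ⟪e, z⟫ < 1 := by
    rw [div_lt_one hs0]
    refine lt_of_lt_of_le ?_ hzδ
    rw [← div_lt_iff₀' hδ]
    linarith
  have h2 : 1 / (ρ * R) ^ 2 * ‖x - (⟪e, x⟫ / ⟪e, z⟫) • z‖ ^ 2 ≤ ⟪e, x⟫ / (2 * R) := by
    have h3 := pow_le_pow_left₀ (norm_nonneg _) (norm_oblique_proj_le he hδ hR hzR hzδ x) 2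
    have h4 : b ≤ R := by
      have : 0 < ⟪e, x⟫ / δ := by positivity
      linarith
    rw [hb, div_le_iff₀ (by positivity)] at h4
    rw [div_mul_eq_mul_div, one_mul, div_le_div_iff₀ (by positivity) (by positivity)]
    have h5 := mul_le_mul_of_nonneg_right (h3.trans (by linarith :
      ((1 + 1 / δ) * ‖x‖) ^ 2 ≤ R * (ρ ^ 2 * ⟪e, x⟫) / 2)) (by positivity : 0 ≤ 2 * R)
    linarith
  have h3 : ⟪e, x⟫ / (2 * R) ≤ ⟪e, x⟫ / ⟪e, z⟫ -
      1 / (ρ * R) ^ 2 * ‖x - (⟪e, x⟫ / ⟪e, z⟫) • z‖ ^ 2 := by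
    have h4 : ⟪e, x⟫ / R ≤ ⟪e, x⟫ / ⟪e, z⟫ := div_le_div_of_nonneg_left hx.le hs0 hsR
    have h5 : ⟪e, x⟫ / R = ⟪e, x⟫ / (2 * R) + ⟪e, x⟫ / (2 * R) := by field_simp; norm_num
    linarith
  have h4 := barrier_bound hp hLip hharm he ha hδ hR hu hzR hzδ hz0 hρ hρL hK0 hK h1
    (lt_of_lt_of_le (by positivity) h3)
  have h5 := mul_le_mul_of_nonneg_left h3
    (by positivity : 0 ≤ a * δ * R / (2 * Real.exp K))
  have h6 : a * δ * R / (2 * Real.exp K) * (⟪e, x⟫ / (2 * R)) =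
      a * δ / (4 * Real.exp K) * ⟪e, x⟫ := by field_simp; norm_num
  linarith

/-! ### Vanishing in the upper half-space -/

/-- Theorem A.1: a nonnegative global Lipschitz function, `p`-harmonic in
`{u > 0}`, positive in the lower half-space, vanishing on `{x_N = 0}`, whose zero set has
uniformly positive density in balls around the origin, vanishes in the upper half-space. -/
theorem pharmonic_linear_growth_vanishes_upper_halfspace
    (N : ℕ) (hN : 0 < N) (p : ℝ) (hp : 1 < p)
    (u : EuD N → ℝ) (L : ℝ≥0) (hLip : LipschitzWith L u)
    (hpos : ∀ x, 0 ≤ u x)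
    (hharm : pHarmonicOn p {x | 0 < u x} u)
    (hlower : {x : EuD N | lastCoord hN x < 0} ⊆ {x | 0 < u x})
    (hzero : ∀ x : EuD N, lastCoord hN x = 0 → u x = 0)
    (lam₀ : ℝ) (hlam₀ : 0 < lam₀) (hlam₀' : lam₀ < 1)
    (hdens : ∀ R : ℝ, 0 < R →
      lam₀ * (volume (ball (0 : EuD N) R)).toReal <
        (volume ({x | u x = 0} ∩ ball (0 : EuD N) R)).toReal) :
    ∀ x : EuD N, 0 < lastCoord hN x → u x = 0 := by
  set e : EuD N := EuclideanSpace.single ⟨N - 1, Nat.sub_lt hN Nat.one_pos⟩ 1 with he_def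
  have he : ‖e‖ = 1 := by simp [he_def]
  have hcoord : ∀ x : EuD N, lastCoord hN x = ⟪e, x⟫ := fun x => by
    simp [he_def, lastCoord, EuclideanSpace.inner_single_left]
  have : Nontrivial (EuD N) := nontrivial_of_ne e 0 fun h => by simp [h] at he
  simp_rw [hcoord] at hzero ⊢
  have hneg : ∀ x, ⟪e, x⟫ < 0 → 0 < u x := fun x hx => hlower (by
    rw [mem_ofPred_eq, hcoord]
    exact hx)
  obtain ⟨δ, hδ, hz⟩ := exists_zero_at_scale he hlam₀ hneg hdens
  have hL : ∀ x, 0 ≤ ⟪e, x⟫ → u x ≤ L * ⟪e, x⟫ := fun x hx => by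
    have h1 := (le_abs_self _).trans (hLip.dist_le_mul x (x - ⟪e, x⟫ • e))
    have h2 : u (x - ⟪e, x⟫ • e) = 0 := hzero _ (by
      rw [inner_sub_right, real_inner_smul_right, real_inner_self_eq_norm_sq, he]
      ring)
    rwa [h2, sub_zero, dist_eq_norm, sub_sub_cancel, norm_smul, he, mul_one,
      Real.norm_of_nonneg hx] at h1
  intro x₀ hx₀
  by_contra hne
  have hux₀ : 0 < u x₀ := lt_of_le_of_ne (hpos x₀) (Ne.symm hne)
  -- the best slope `a` of a linear upper bound in the half-space
  set T : Set ℝ := (fun x => u x / ⟪e, x⟫) '' {x | 0 < ⟪e, x⟫} with hT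
  have hTne : T.Nonempty := ⟨_, mem_image_of_mem _ hx₀⟩
  have hTb : BddAbove T := ⟨L, by
    rintro _ ⟨x, hx, rfl⟩
    exact (div_le_iff₀ hx).2 (hL x (le_of_lt hx))⟩
  set a := sSup T with ha_def
  have ha : 0 < a := (div_pos hux₀ hx₀).trans_le (le_csSup hTb (mem_image_of_mem _ hx₀))
  have hu : ∀ x, 0 ≤ ⟪e, x⟫ → u x ≤ a * ⟪e, x⟫ := fun x hx => by
    rcases hx.eq_or_lt with h | h
    · rw [hzero x h.symm, ← h, mul_zero]
    · exact (div_le_iff₀ h).1 (le_csSup hTb (mem_image_of_mem _ h))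
  obtain ⟨θ, hθ, himp⟩ := improve_slope hp hLip hharm he ha hδ hu hz
  have : a ≤ a - θ := csSup_le hTne (by
    rintro _ ⟨x, hx, rfl⟩
    exact (div_le_iff₀ hx).2 (himp x hx))
  linarith
end
end

section
/- Let 1 < p < ∞ and let u be Lipschitz continuous on the closure of B_1^+ = B_1(0) ∩ {x_N > 0}, with u ≥ 0 in B_1^+, u p-harmonic in {u > 0}, and u vanishing on ∂B_1^+ ∩ {x_N = 0}. Then there exists α ≥ 0 such that u has the asymptotic development u(x) = α x_N + o(|x|) as x → 0 in B_1^+. -/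
/-!
Near the origin `u` lies below linear functions `a x_N`: the Lipschitz bound and the vanishing on
the flat boundary give `u ≤ L x_N`. Let `α` be the infimum of the slopes `a ≥ 0` such that
`u ≤ a x_N` in some half-ball around `0`. Then `u ≤ α x_N + o(|x|)` by definition, and the content
of the theorem is the matching lower bound. If it fails, then `α > 0` and there are `δ > 0` and
arbitrarily small `x` with `u x < α x_N - δ |x|`. Since `u ≥ 0`, such an `x` satisfies
`x_N ≥ (δ/α) |x|`, and since `u` is Lipschitz the deficit persists on a ball `|z - x| ≤ s |x|` with
`s` independent of `x`. The contradiction is that this forces a strictly smaller slope to be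
admissible (`improve_slope`).

The slope is lowered by comparison with an explicit barrier. In the half-annulus
`{z_N > 0, s |x| < |z - x| < 2 |x|}`, rescaled to `|x| = 1`, take
`W = z_N (β - κ (exp(-μ |z - x|²) - exp(-4μ)))` with `β = α + ε`. For `μ` large and then `κ`, `ε`
small, `W` is a strict `p`-supersolution with nonvanishing gradient: its gradient is close to
`α e_N`, where the `p`-Laplacian linearises to a uniformly elliptic operator (`barQ_pos`,
`barQ_pos_nhds`, `pOp_barG`). As `u ≤ W` on the boundary of the half-annulus, `u ≤ W` inside, and
near `0` this reads `u ≤ (β - κ c₀) z_N` with `c₀ > 0` depending on `μ` only; finally `ε < κ c₀`.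

The comparison principle (`comparison`) tests the equation of `u` and the inequality for `W` with
the truncation `(u - W - θ)⁺`, supported in `{u > 0}` because `W ≥ 0`. This truncation is only
Lipschitz, so the equation for `u` is first extended to Lipschitz test functions by mollification
(`pLap_eq_zero_of_lipschitz`); monotonicity of `a ↦ |a|^{p-2} a` concludes. To have a globally
Lipschitz `u`, one replaces it by a Lipschitz extension from the closed half-ball.
-/


open MeasureTheory Metric Set Filter Asymptotics
open scoped RealInnerProductSpace ENNReal NNReal Topology

noncomputable section

variable {N : ℕ}

/-! ### Monotonicity of the flux and Lipschitz test functions -/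

/-- The vector field `a ↦ |a|^{p-2} a` is monotone. -/
lemma flux_mono {p : ℝ} (hp : 1 < p) (a b : EuD N) :
    0 ≤ ⟪‖a‖ ^ (p - 2) • a - ‖b‖ ^ (p - 2) • b, a - b⟫ := by
  have key : ∀ c : EuD N, ‖c‖ ^ (p - 2) * ‖c‖ = ‖c‖ ^ (p - 1) := by
    intro c
    rcases eq_or_ne c 0 with rfl | hc
    · simp [Real.zero_rpow (by linarith : p - 1 ≠ 0)]
    · rw [← Real.rpow_add_one (norm_ne_zero_iff.2 hc)]; ring_nf
  have hA : 0 ≤ ‖a‖ ^ (p - 2) := by positivity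
  have hB : 0 ≤ ‖b‖ ^ (p - 2) := by positivity
  have hab : ⟪a, b⟫ ≤ ‖a‖ * ‖b‖ := real_inner_le_norm a b
  have e : ⟪‖a‖ ^ (p - 2) • a - ‖b‖ ^ (p - 2) • b, a - b⟫
      = ‖a‖ ^ (p - 2) * ‖a‖ ^ 2 + ‖b‖ ^ (p - 2) * ‖b‖ ^ 2
        - (‖a‖ ^ (p - 2) + ‖b‖ ^ (p - 2)) * ⟪a, b⟫ := by
    simp only [inner_sub_left, inner_sub_right, real_inner_smul_left,
      real_inner_self_eq_norm_sq, real_inner_comm a b]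
    ring
  have h2 : 0 ≤ (‖a‖ ^ (p - 1) - ‖b‖ ^ (p - 1)) * (‖a‖ - ‖b‖) := by
    rcases le_total ‖a‖ ‖b‖ with h | h
    · have := Real.rpow_le_rpow (norm_nonneg _) h (by linarith : 0 ≤ p - 1)
      exact mul_nonneg_of_nonpos_of_nonpos (by linarith) (by linarith)
    · have := Real.rpow_le_rpow (norm_nonneg _) h (by linarith : 0 ≤ p - 1)
      exact mul_nonneg (by linarith) (by linarith)
  rw [← key a, ← key b] at h2
  rw [e]
  have := mul_le_mul_of_nonneg_left hab (add_nonneg hA hB)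
  nlinarith

lemma norm_gradient_le {u : EuD N → ℝ} {L : ℝ≥0} (hu : LipschitzWith L u) (x : EuD N) :
    ‖gradient u x‖ ≤ L := by
  simpa [gradient] using norm_fderiv_le_of_lipschitz ℝ hu (x₀ := x)

lemma inner_grad_eq (u : EuD N → ℝ) (x v : EuD N) :
    ⟪v, gradient u x⟫ = fderiv ℝ u x v := by
  rw [real_inner_comm]; simp [gradient]

lemma measurable_flux (p : ℝ) (u : EuD N → ℝ) :
    Measurable fun x => ‖gradient u x‖ ^ (p - 2) • gradient u x :=
  ((measurable_gradient u).norm.pow_const _).smul (measurable_gradient u)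

lemma norm_flux_le {p : ℝ} (hp : 1 < p) {u : EuD N → ℝ} {L : ℝ≥0} (hu : LipschitzWith L u)
    (x : EuD N) : ‖‖gradient u x‖ ^ (p - 2) • gradient u x‖ ≤ (L : ℝ) ^ (p - 1) := by
  rw [norm_smul, Real.norm_of_nonneg (by positivity)]
  rcases eq_or_ne (gradient u x) 0 with h | h
  · simp only [h, norm_zero, mul_zero]; positivity
  · rw [← Real.rpow_add_one (norm_ne_zero_iff.2 h)]
    ring_nf
    exact Real.rpow_le_rpow (norm_nonneg _) (norm_gradient_le hu x) (by linarith)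

lemma pLap_eq_flux (p : ℝ) (u φ : EuD N → ℝ) :
    pLap p u φ = ∫ x, ⟪‖gradient u x‖ ^ (p - 2) • gradient u x, gradient φ x⟫ := by
  simp only [pLap, real_inner_smul_left]

lemma gradient_eq_zero_of_notMem_tsupport {φ : EuD N → ℝ} {x : EuD N} (hx : x ∉ tsupport φ) :
    gradient φ x = 0 := by
  have h : fderiv ℝ φ x = 0 := by
    by_contra h
    exact hx (support_fderiv_subset ℝ h)
  simp [gradient, h]

open ContinuousLinearMap in
/-- Convolving a Lipschitz function with a bump function: the derivative falls
on the Lipschitz factor, where it exists almost everywhere by Rademacher's theorem. -/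
lemma hasFDerivAt_bump_convolution {ψ : EuD N → ℝ} {C : ℝ≥0} (hψ : LipschitzWith C ψ)
    (φ : ContDiffBump (0 : EuD N)) (x : EuD N) :
    HasFDerivAt (fun y => ∫ t, φ.normed volume t * ψ (y - t))
      (∫ t, φ.normed volume t • fderiv ℝ ψ (x - t)) x := by
  have hφc := φ.continuous_normed (μ := volume)
  have hint : ∀ y, Integrable (fun t => φ.normed volume t * ψ (y - t)) := fun y => by
    apply Continuous.integrable_of_hasCompactSupport
    · exact hφc.mul (hψ.continuous.comp (by fun_prop))
    · exact (φ.hasCompactSupport_normed (μ := volume)).mul_right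
  refine (hasFDerivAt_integral_of_dominated_loc_of_lip (𝕜 := ℝ)
    (F := fun y t => φ.normed volume t * ψ (y - t)) (bound := fun t => C * φ.normed volume t)
    univ_mem
    (Eventually.of_forall fun y => (hint y).aestronglyMeasurable) (hint x) ?_ ?_ ?_ ?_).2
  · apply AEStronglyMeasurable.smul hφc.aestronglyMeasurable
    exact ((measurable_fderiv ℝ ψ).comp (measurable_const.sub measurable_id)).aestronglyMeasurable
  · refine Eventually.of_forall fun t => ?_
    refine LipschitzOnWith.of_dist_le_mul fun y _ z _ => ?_
    have h1 := hψ.dist_le_mul (y - t) (z - t)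
    rw [dist_sub_right] at h1
    have h2 := φ.nonneg_normed (μ := volume) t
    simp only [Real.coe_nnabs, abs_mul, NNReal.abs_eq, abs_of_nonneg h2]
    rw [Real.dist_eq, ← mul_sub, abs_mul, abs_of_nonneg h2, ← Real.dist_eq]
    nlinarith
  · exact (φ.integrable_normed (μ := volume)).const_mul _
  · have h := hψ.ae_differentiableAt (μ := volume)
    have hq : Measure.QuasiMeasurePreserving (fun t : EuD N => x - t) volume volume :=
      (Measure.measurePreserving_sub_left volume x).quasiMeasurePreserving
    filter_upwards [hq.ae h] with t ht
    have h1 : HasFDerivAt (fun y => ψ (y - t)) (fderiv ℝ ψ (x - t)) x := by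
      have h0 := HasFDerivAt.comp (g := ψ) x ht.hasFDerivAt ((hasFDerivAt_id x).sub_const t)
      rw [ContinuousLinearMap.comp_id] at h0
      exact h0
    exact h1.const_mul _

/-- The shrinking bump functions used for mollification. -/
def mollBump (N n : ℕ) : ContDiffBump (0 : EuD N) where
  rIn := 1 / ((n : ℝ) + 1)
  rOut := 2 * (1 / ((n : ℝ) + 1))
  rIn_pos := by positivity
  rIn_lt_rOut := by
    have : 0 < 1 / ((n : ℝ) + 1) := by positivity
    linarith

open ContinuousLinearMap in
/-- By mollification, a `p`-harmonic function may be tested against Lipschitz functions with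
compact support. -/
lemma pLap_eq_zero_of_lipschitz {p : ℝ} (hp : 1 < p) {V : Set (EuD N)} (hV : IsOpen V)
    {u : EuD N → ℝ} {L : ℝ≥0} (hu : LipschitzWith L u) (hh : pHarmonicOn p V u)
    {ψ : EuD N → ℝ} {C : ℝ≥0} (hψ : LipschitzWith C ψ) (hc : HasCompactSupport ψ)
    (hs : tsupport ψ ⊆ V) : pLap p u ψ = 0 := by
  obtain ⟨δ, hδ, hδV⟩ := hc.isCompact.exists_cthickening_subset_open hV hs
  set K := cthickening δ (tsupport ψ) with hK
  have hKc : IsCompact K := hc.isCompact.cthickening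
  set ψn : ℕ → EuD N → ℝ := fun n y => ∫ t, (mollBump N n).normed volume t * ψ (y - t) with hψn
  have hder : ∀ n x, HasFDerivAt (ψn n)
      (∫ t, (mollBump N n).normed volume t • fderiv ℝ ψ (x - t)) x :=
    fun n x => hasFDerivAt_bump_convolution hψ _ x
  have hlim0 : Tendsto (fun n => (mollBump N n).rOut) atTop (𝓝 0) := by
    simpa [mollBump] using (tendsto_one_div_add_atTop_nhds_zero_nat (𝕜 := ℝ)).const_mul 2
  have hev : ∀ᶠ n in atTop, (mollBump N n).rOut < δ := hlim0.eventually (gt_mem_nhds hδ)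
  have hsub : ∀ n, (mollBump N n).rOut < δ → tsupport (ψn n) ⊆ K := by
    intro n hn
    refine closure_minimal ?_ isClosed_cthickening
    intro x hx
    by_contra hxK
    apply hx
    have : ∀ t, (mollBump N n).normed volume t * ψ (x - t) = 0 := by
      intro t
      by_contra hne
      have h1 : (mollBump N n).normed volume t ≠ 0 := left_ne_zero_of_mul hne
      have h2 : ψ (x - t) ≠ 0 := right_ne_zero_of_mul hne
      have h3 : t ∈ ball (0 : EuD N) (mollBump N n).rOut := by
        rw [← ContDiffBump.support_normed_eq (μ := volume)]; exact h1
      rw [mem_ball_zero_iff] at h3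
      apply hxK
      refine mem_cthickening_of_dist_le x (x - t) δ _ (subset_tsupport _ h2) ?_
      rw [dist_eq_norm]; simp; linarith
    simp [hψn, this]
  have hsmooth : ∀ n, ContDiff ℝ (⊤ : ℕ∞) (ψn n) := by
    intro n
    have := (mollBump N n).hasCompactSupport_normed (μ := volume) |>.contDiff_convolution_left
      (lsmul ℝ ℝ) (n := ⊤) (g := ψ) (μ := volume) ((mollBump N n).contDiff_normed)
      hψ.continuous.locallyIntegrable
    exact this
  have hz : ∀ᶠ n in atTop, pLap p u (ψn n) = 0 := by
    filter_upwards [hev] with n hn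
    exact hh _ ⟨hsmooth n, hKc.of_isClosed_subset (isClosed_tsupport _) (hsub n hn),
      (hsub n hn).trans hδV⟩
  have hbd : ∀ n x, ‖fderiv ℝ (ψn n) x‖ ≤ C := by
    intro n x
    rw [(hder n x).fderiv]
    calc ‖∫ t, (mollBump N n).normed volume t • fderiv ℝ ψ (x - t)‖
        ≤ ∫ t, (mollBump N n).normed volume t * C := by
          refine norm_integral_le_of_norm_le
            (((mollBump N n).integrable_normed (μ := volume)).mul_const _)
            (Eventually.of_forall fun t => ?_)
          rw [norm_smul, Real.norm_of_nonneg ((mollBump N n).nonneg_normed t)]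
          exact mul_le_mul_of_nonneg_left (norm_fderiv_le_of_lipschitz ℝ hψ)
            ((mollBump N n).nonneg_normed t)
      _ = C := by rw [integral_mul_const, (mollBump N n).integral_normed, one_mul]
  have hae : ∀ᵐ x : EuD N, Tendsto (fun n => fderiv ℝ (ψn n) x) atTop (𝓝 (fderiv ℝ ψ x)) := by
    have hloc : LocallyIntegrable (fderiv ℝ ψ) (volume : Measure (EuD N)) := by
      refine (locallyIntegrable_const (C : ℝ)).mono
        (measurable_fderiv ℝ ψ).aestronglyMeasurable (Eventually.of_forall fun x => ?_)
      simpa using norm_fderiv_le_of_lipschitz ℝ hψ (x₀ := x)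
    have := ContDiffBump.ae_convolution_tendsto_right_of_locallyIntegrable
      (φ := mollBump N) (K := 2) hlim0 (Eventually.of_forall fun n => le_rfl) hloc
    filter_upwards [this] with x hx
    refine hx.congr fun n => ?_
    rw [(hder n x).fderiv]
    rfl
  have hlim : Tendsto (fun n => pLap p u (ψn n)) atTop (𝓝 (pLap p u ψ)) := by
    simp only [pLap_eq_flux, inner_grad_eq]
    refine tendsto_integral_filter_of_dominated_convergence
      (K.indicator fun _ => (C : ℝ) * (L : ℝ) ^ (p - 1)) ?_ ?_ ?_ ?_
    · refine Eventually.of_forall fun n => ?_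
      simp only [← inner_grad_eq]
      exact ((measurable_flux p u).inner (measurable_gradient _)).aestronglyMeasurable
    · filter_upwards [hev] with n hn
      refine Eventually.of_forall fun x => ?_
      by_cases hx : x ∈ K
      · rw [indicator_of_mem hx]
        refine (le_opNorm _ _).trans ?_
        exact mul_le_mul (hbd n x) (norm_flux_le hp hu x) (norm_nonneg _) C.2
      · rw [indicator_of_notMem hx, ← inner_grad_eq,
          gradient_eq_zero_of_notMem_tsupport (fun h => hx (hsub n hn h))]
        simp
    · exact (integrable_indicator_iff hKc.measurableSet).2
        (integrableOn_const hKc.measure_lt_top.ne)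
    · filter_upwards [hae] with x hx
      exact ((ContinuousLinearMap.apply ℝ ℝ _).continuous.tendsto _).comp hx
  exact tendsto_nhds_unique hlim (tendsto_const_nhds.congr' (hz.mono fun n h => h.symm))

/-! ### Strict classical supersolutions and the comparison principle -/

/-- `|g|^{4-p}` times the divergence of the flux `|g|^{p-2} g`, in nondivergence form; for `g = ∇W`
this is the (normalised) `p`-Laplacian of `W`. -/
def pOp (p : ℝ) (g : EuD N → EuD N) (z : EuD N) : ℝ :=
  ‖g z‖ ^ 2 * ∑ i, (fderiv ℝ g z (EuclideanSpace.single i 1)) i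
    + (p - 2) * ⟪g z, fderiv ℝ g z (g z)⟫

lemma norm_rpow_eq (p : ℝ) (a : EuD N) : ‖a‖ ^ (p - 2) = (‖a‖ ^ 2) ^ ((p - 2) / 2) := by
  rw [← Real.rpow_natCast, ← Real.rpow_mul (norm_nonneg _)]
  congr 1
  push_cast
  ring

lemma sum_coord_smul (a : EuD N) : ∑ i, a i • EuclideanSpace.single i (1 : ℝ) = a := by
  classical
  have := (EuclideanSpace.basisFun (Fin N) ℝ).sum_repr a
  simpa using this

lemma inner_eq_sum_coord (a b : EuD N) : ⟪a, b⟫ = ∑ i, a i * b i := by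
  simp [PiLp.inner_apply, mul_comm]

lemma contDiffAt_flux (p : ℝ) {g : EuD N → EuD N} (hg : ContDiff ℝ 1 g) {z : EuD N}
    (hz : g z ≠ 0) : ContDiffAt ℝ 1 (fun x => ‖g x‖ ^ (p - 2) • g x) z := by
  have h1 : ContDiffAt ℝ 1 (fun x => ‖g x‖) z := hg.contDiffAt.norm ℝ hz
  exact (h1.rpow_const_of_ne (norm_ne_zero_iff.2 hz)).smul hg.contDiffAt

/-- The divergence of the flux has the sign of `pOp`. -/
lemma div_flux_neg {p : ℝ} {g : EuD N → EuD N} (hg : ContDiff ℝ 1 g) {z : EuD N}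
    (hz : g z ≠ 0) (hneg : pOp p g z < 0) :
    ∑ i, (fderiv ℝ (fun x => ‖g x‖ ^ (p - 2) • g x) z (EuclideanSpace.single i 1)) i < 0 := by
  have hgd : HasFDerivAt g (fderiv ℝ g z) z :=
    (hg.differentiable one_ne_zero z).hasFDerivAt
  have hpos : 0 < ‖g z‖ ^ 2 := by have := norm_pos_iff.2 hz; positivity
  have hd := ((hgd.norm_sq).rpow_const (p := (p - 2) / 2) (Or.inl hpos.ne')).smul hgd
  have hfun : (fun x => ‖g x‖ ^ (p - 2) • g x)
      = fun x => (‖g x‖ ^ 2) ^ ((p - 2) / 2) • g x := by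
    funext x; rw [norm_rpow_eq]
  have hfd := (hd.congr_of_eventuallyEq (f₁ := fun x => ‖g x‖ ^ (p - 2) • g x)
    (Eventually.of_forall fun x => congrFun hfun x)).fderiv
  set c₁ := (‖g z‖ ^ 2) ^ ((p - 2) / 2 - 1) with hc₁
  have hc₁pos : 0 < c₁ := Real.rpow_pos_of_pos hpos _
  have hc : (‖g z‖ ^ 2) ^ ((p - 2) / 2) = c₁ * ‖g z‖ ^ 2 := by
    rw [hc₁, Real.rpow_sub_one hpos.ne']; field_simp
  have hsum : ∑ i, ⟪g z, fderiv ℝ g z (EuclideanSpace.single i 1)⟫ * g z i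
      = ⟪g z, fderiv ℝ g z (g z)⟫ := by
    conv_rhs => rw [← sum_coord_smul (g z)]
    rw [map_sum, sum_coord_smul, inner_sum]
    refine Finset.sum_congr rfl fun i _ => ?_
    rw [map_smul, real_inner_smul_right, mul_comm]
  have : ∑ i, (fderiv ℝ (fun x => ‖g x‖ ^ (p - 2) • g x) z (EuclideanSpace.single i 1)) i
      = c₁ * pOp p g z := by
    rw [hfd, pOp, ← hsum, mul_add, Finset.mul_sum, Finset.mul_sum, Finset.mul_sum,
      Finset.mul_sum, ← Finset.sum_add_distrib]
    refine Finset.sum_congr rfl fun i _ => ?_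
    simp [hc]
    ring
  rw [this]
  exact mul_neg_of_pos_of_neg hc₁pos hneg

lemma exists_cutoff {S V : Set (EuD N)} (hS : IsCompact S) (hV : IsOpen V) (hSV : S ⊆ V) :
    ∃ η : EuD N → ℝ, ContDiff ℝ (⊤ : ℕ∞) η ∧ (∀ x ∈ S, ∀ᶠ y in 𝓝 x, η y = 1) ∧
      HasCompactSupport η ∧ tsupport η ⊆ V := by
  obtain ⟨δ, hδ, hδV⟩ := hS.exists_cthickening_subset_open hV hSV
  have hint : S ⊆ interior (cthickening δ S) :=
    (self_subset_thickening hδ S).trans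
      (interior_maximal (thickening_subset_cthickening δ S) isOpen_thickening)
  obtain ⟨f, h1, h0, -⟩ := exists_contMDiffMap_one_nhds_of_subset_interior
    (n := (⊤ : ℕ∞)) (modelWithCornersSelf ℝ (EuD N)) hS.isClosed hint
  have hts : tsupport (f : EuD N → ℝ) ⊆ cthickening δ S := by
    refine closure_minimal ?_ isClosed_cthickening
    intro x hx
    by_contra h
    exact hx (h0 x h)
  exact ⟨f, f.contMDiff.contDiff, fun x hx => (eventually_nhdsSet_iff_forall.1 h1) x hx,
    hS.cthickening.of_isClosed_subset (isClosed_tsupport _) hts, hts.trans hδV⟩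

/-- A strict classical supersolution is a strict weak supersolution: integrate by parts against a
Lipschitz test function. A cutoff makes the flux, singular where `g = 0`, globally `C¹`. -/
lemma integral_flux_pos {p : ℝ} {g : EuD N → EuD N} (hg : ContDiff ℝ 1 g) {V : Set (EuD N)}
    (hV : IsOpen V) (hg0 : ∀ z ∈ V, g z ≠ 0) (hneg : ∀ z ∈ V, pOp p g z < 0)
    {ψ : EuD N → ℝ} {C : ℝ≥0} (hψ : LipschitzWith C ψ) (hc : HasCompactSupport ψ)
    (hs : tsupport ψ ⊆ V) (hψ0 : ∀ x, 0 ≤ ψ x) {z₀ : EuD N} (hz₀ : ψ z₀ ≠ 0) :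
    0 < ∫ x, ⟪‖g x‖ ^ (p - 2) • g x, gradient ψ x⟫ := by
  obtain ⟨η, hη, hη1, hηc, hηV⟩ := exists_cutoff hc.isCompact hV hs
  set F : EuD N → EuD N := fun x => η x • (‖g x‖ ^ (p - 2) • g x) with hF
  have hFsm : ContDiff ℝ 1 F := by
    rw [contDiff_iff_contDiffAt]
    intro z
    by_cases hz : z ∈ tsupport η
    · exact (hη.contDiffAt.of_le (by exact_mod_cast le_top)).smul
        (contDiffAt_flux p hg (hg0 z (hηV hz)))
    · have h0 := notMem_tsupport_iff_eventuallyEq.1 hz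
      refine (contDiffAt_const (c := (0 : EuD N))).congr_of_eventuallyEq ?_
      filter_upwards [h0] with y hy
      simp [hF, hy]
  have hFeq : ∀ z ∈ tsupport ψ, F =ᶠ[𝓝 z] fun x => ‖g x‖ ^ (p - 2) • g x := by
    intro z hz
    filter_upwards [hη1 z hz] with y hy
    simp [hF, hy]
  have hFc : HasCompactSupport F := hηc.smul_right
  set f : Fin N → EuD N → ℝ := fun i x => F x i with hf
  have hfsm : ∀ i, ContDiff ℝ 1 (f i) := fun i =>
    (EuclideanSpace.proj (𝕜 := ℝ) i).contDiff.comp hFsm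
  have hfc : ∀ i, HasCompactSupport (f i) := fun i =>
    hFc.comp_left (g := fun v : EuD N => v i) rfl
  have hflip : ∀ i, ∃ D, LipschitzWith D (f i) := fun i =>
    (hfsm i).lipschitzWith_of_hasCompactSupport (hfc i) one_ne_zero
  have hfder : ∀ i z v, fderiv ℝ (f i) z v = (fderiv ℝ F z v) i := by
    intro i z v
    have := ((EuclideanSpace.proj (𝕜 := ℝ) i).hasFDerivAt (x := F z)).comp z
      (hFsm.differentiable one_ne_zero z).hasFDerivAt
    rw [show f i = (EuclideanSpace.proj (𝕜 := ℝ) i) ∘ F from rfl, this.fderiv]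
    rfl
  have hib : ∀ i, Integrable (fun x => lineDeriv ℝ ψ x (EuclideanSpace.single i 1) * f i x) := by
    intro i
    refine ((hfsm i).continuous.integrable_of_hasCompactSupport (hfc i)).bdd_mul
      (c := C * ‖(EuclideanSpace.single i (1 : ℝ) : EuD N)‖) ?_
      (Eventually.of_forall fun x => norm_lineDeriv_le_of_lipschitz ℝ hψ)
    exact (measurable_lineDeriv hψ.continuous).aestronglyMeasurable
  have hI1 : ∫ x, ⟪‖g x‖ ^ (p - 2) • g x, gradient ψ x⟫
      = ∫ x, ∑ i, lineDeriv ℝ ψ x (EuclideanSpace.single i 1) * f i x := by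
    refine integral_congr_ae ?_
    filter_upwards [hψ.ae_differentiableAt (μ := volume)] with x hx
    have e1 : ⟪‖g x‖ ^ (p - 2) • g x, gradient ψ x⟫ = ⟪F x, gradient ψ x⟫ := by
      by_cases hxs : x ∈ tsupport ψ
      · rw [(hFeq x hxs).eq_of_nhds]
      · rw [gradient_eq_zero_of_notMem_tsupport hxs]; simp
    rw [e1, inner_grad_eq]
    conv_lhs => rw [← sum_coord_smul (F x), map_sum]
    refine Finset.sum_congr rfl fun i _ => ?_
    rw [map_smul, hx.lineDeriv_eq_fderiv, smul_eq_mul, mul_comm]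
  set G : EuD N → ℝ := fun x =>
    -(∑ i, fderiv ℝ (f i) x (EuclideanSpace.single i 1)) * ψ x with hG
  have hI2 : ∫ x, ∑ i, lineDeriv ℝ ψ x (EuclideanSpace.single i 1) * f i x = ∫ x, G x := by
    rw [integral_finsetSum _ fun i _ => hib i]
    have : ∀ i, ∫ x, lineDeriv ℝ ψ x (EuclideanSpace.single i 1) * f i x
        = ∫ x, -(fderiv ℝ (f i) x (EuclideanSpace.single i 1)) * ψ x := by
      intro i
      obtain ⟨D, hD⟩ := hflip i
      have h := hD.integral_lineDeriv_mul_eq (μ := volume) hψ hc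
        (-(EuclideanSpace.single i (1 : ℝ)))
      rw [neg_neg] at h
      rw [← h]
      refine integral_congr_ae (Eventually.of_forall fun x => ?_)
      simp only
      rw [((hfsm i).differentiable one_ne_zero x).lineDeriv_eq_fderiv, map_neg]
    simp_rw [this]
    rw [← integral_finsetSum]
    · refine integral_congr_ae (Eventually.of_forall fun x => ?_)
      simp only [hG, ← Finset.sum_mul, Finset.sum_neg_distrib]
    · intro i _
      apply Continuous.integrable_of_hasCompactSupport
      · exact ((((hfsm i).continuous_fderiv one_ne_zero).clm_apply continuous_const).neg).mul
          hψ.continuous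
      · exact hc.mul_left
  have hdiv : ∀ x ∈ tsupport ψ, ∑ i, fderiv ℝ (f i) x (EuclideanSpace.single i 1) < 0 := by
    intro x hx
    have := div_flux_neg hg (hg0 x (hs hx)) (hneg x (hs hx))
    rw [← (hFeq x hx).fderiv_eq] at this
    simpa [hfder] using this
  rw [hI1, hI2]
  refine Continuous.integral_pos_of_hasCompactSupport_nonneg_nonzero (x := z₀) ?_ ?_ ?_ ?_
  · exact ((continuous_finsetSum _ fun i _ =>
      ((hfsm i).continuous_fderiv one_ne_zero).clm_apply continuous_const).neg).mul
          hψ.continuous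
  · exact hc.mul_left
  · intro x
    by_cases hx : x ∈ tsupport ψ
    · exact mul_nonneg (by linarith [hdiv x hx]) (hψ0 x)
    · simp [hG, image_eq_zero_of_notMem_tsupport hx]
  · exact mul_ne_zero (neg_pos.2 (hdiv z₀ (subset_tsupport _ hz₀))).ne' hz₀

/-- **Comparison principle** between a Lipschitz function `u`, `p`-harmonic where positive, and a
nonnegative strict classical supersolution `W` with gradient field `g`: if `u ≤ W` on the
boundary of `Ω` (here: on `K \ Ω`), then `u ≤ W` in `Ω`. The truncation `(u - W - θ)⁺` with `θ > 0`
is compactly supported in `{u > 0} ∩ Ω`, hence an admissible test function. -/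
lemma comparison_s19 {p : ℝ} (hp : 1 < p) {u : EuD N → ℝ} {L : ℝ≥0} (hu : LipschitzWith L u)
    {D Ω K : Set (EuD N)} (hD : IsOpen D) (hΩ : IsOpen Ω) (hK : IsCompact K) (hΩK : Ω ⊆ K)
    (hΩD : Ω ⊆ D) (hh : pHarmonicOn p ({x | 0 < u x} ∩ D) u)
    {W : EuD N → ℝ} {g : EuD N → EuD N} (hW : ContDiff ℝ 1 W)
    (hWg : ∀ z, HasGradientAt W (g z) z) (hg : ContDiff ℝ 1 g) (hg0 : ∀ z ∈ Ω, g z ≠ 0)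
    (hneg : ∀ z ∈ Ω, pOp p g z < 0) (hW0 : ∀ z ∈ Ω, 0 ≤ W z)
    (hbd : ∀ z ∈ K, z ∉ Ω → u z ≤ W z) : ∀ z ∈ Ω, u z ≤ W z := by
  intro z₀ hz₀
  by_contra! hlt
  obtain ⟨θ, hθ, hθ2⟩ : ∃ θ > 0, θ < u z₀ - W z₀ :=
    ⟨(u z₀ - W z₀) / 2, by linarith, by linarith⟩
  set f : EuD N → ℝ := fun x => max (u x - W x - θ) 0 with hf
  have hfcont : Continuous f :=
    ((hu.continuous.sub hW.continuous).sub continuous_const).max continuous_const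
  set ψ : EuD N → ℝ := Ω.indicator f with hψ
  have hψ0 : ∀ x, 0 ≤ ψ x := fun x => indicator_nonneg (fun _ _ => le_max_right _ _) x
  set S : Set (EuD N) := K ∩ {x | θ ≤ u x - W x} with hS
  have hSc : IsCompact S :=
    hK.inter_right (isClosed_le continuous_const (hu.continuous.sub hW.continuous))
  have hSΩ : S ⊆ Ω := by
    intro x hx
    by_contra h
    have := hbd x hx.1 h
    have h2 : θ ≤ u x - W x := hx.2
    linarith
  have hsupp : tsupport ψ ⊆ S := by
    refine closure_minimal ?_ hSc.isClosed
    intro x hx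
    have hxΩ : x ∈ Ω := by
      by_contra h
      exact hx (indicator_of_notMem h _)
    refine ⟨hΩK hxΩ, ?_⟩
    by_contra h
    apply hx
    have h' : u x - W x < θ := not_le.1 h
    rw [hψ, indicator_of_mem hxΩ]
    exact max_eq_right (by linarith)
  have hc : HasCompactSupport ψ := hSc.of_isClosed_subset (isClosed_tsupport _) hsupp
  have hSV : S ⊆ ({x | 0 < u x} ∩ D) ∩ Ω := by
    intro x hx
    have h1 := hSΩ hx
    have h2 : θ ≤ u x - W x := hx.2
    refine ⟨⟨?_, hΩD h1⟩, h1⟩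
    have := hW0 x h1
    show 0 < u x
    linarith
  -- `f` is Lipschitz and bounded on `K`; between a point of `S` and a point outside `Ω` one divides
  -- the bound by the positive distance of `S` to the complement of `Ω`.
  have hψlip : ∃ C, LipschitzWith C ψ := by
    obtain ⟨δ, hδ, hδΩ⟩ := hSc.exists_cthickening_subset_open hΩ hSΩ
    obtain ⟨CW, hCW⟩ := LocallyLipschitzOn.exists_lipschitzOnWith_of_compact hK
      (hW.locallyLipschitz.locallyLipschitzOn)
    obtain ⟨M, hM⟩ := hK.exists_bound_of_continuousOn hfcont.continuousOn
    have hM0 : 0 ≤ M := (norm_nonneg _).trans (hM z₀ (hΩK hz₀))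
    have hflip : ∀ x ∈ K, ∀ y ∈ K, |f x - f y| ≤ (L + CW) * dist x y := by
      intro x hx y hy
      have h1 := hu.dist_le_mul x y
      have h2 := hCW.dist_le_mul x hx y hy
      rw [Real.dist_eq] at h1 h2
      refine (abs_max_sub_max_le_abs _ _ _).trans ?_
      rw [abs_le] at h1 h2 ⊢
      constructor <;> linarith [h1.1, h1.2, h2.1, h2.2]
    have hfar : ∀ x ∈ Ω, ∀ y ∉ Ω, ψ x ≤ M / δ * dist x y := by
      intro x hx y hy
      by_cases hxS : x ∈ S
      · have hd : δ ≤ dist x y := by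
          by_contra! h
          exact hy (hδΩ (mem_cthickening_of_dist_le y x δ _ hxS (by rw [dist_comm]; exact h.le)))
        have h1 : ψ x ≤ M := by
          rw [hψ, indicator_of_mem hx]
          exact (le_abs_self _).trans (hM x (hΩK hx))
        calc ψ x ≤ M / δ * δ := by rw [div_mul_cancel₀ _ hδ.ne']; exact h1
          _ ≤ M / δ * dist x y := by gcongr
      · have : ψ x = 0 := image_eq_zero_of_notMem_tsupport fun h => hxS (hsupp h)
        rw [this]; positivity
    refine ⟨⟨(L + CW) + M / δ, by positivity⟩, LipschitzWith.of_dist_le_mul fun x y => ?_⟩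
    rw [Real.dist_eq]
    change _ ≤ ((L + CW) + M / δ) * dist x y
    have n1 : 0 ≤ ((L : ℝ) + CW) * dist x y := by positivity
    have n2 : 0 ≤ M / δ * dist x y := by positivity
    rw [add_mul]
    by_cases hx : x ∈ Ω <;> by_cases hy : y ∈ Ω
    · have := hflip x (hΩK hx) y (hΩK hy)
      rw [hψ, indicator_of_mem hx, indicator_of_mem hy]
      linarith
    · have h1 := hfar x hx y hy
      have h2 : ψ y = 0 := indicator_of_notMem hy _
      rw [h2, sub_zero, abs_of_nonneg (hψ0 x)]
      linarith
    · have h1 := hfar y hy x hx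
      have h2 : ψ x = 0 := indicator_of_notMem hx _
      rw [h2, zero_sub, abs_neg, abs_of_nonneg (hψ0 y), dist_comm]
      rw [dist_comm] at n1
      linarith
    · have h1 : ψ x = 0 := indicator_of_notMem hx _
      have h2 : ψ y = 0 := indicator_of_notMem hy _
      rw [h1, h2, sub_zero, abs_zero]
      linarith
  obtain ⟨C, hC⟩ := hψlip
  have hV : IsOpen ({x | 0 < u x} ∩ D) :=
    (isOpen_lt continuous_const hu.continuous).inter hD
  have hz : pLap p u ψ = 0 := pLap_eq_zero_of_lipschitz hp hV hu hh hC hc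
    (hsupp.trans (hSV.trans inter_subset_left))
  have hψz : ψ z₀ ≠ 0 := by
    rw [hψ, indicator_of_mem hz₀, hf]
    exact (lt_max_of_lt_left (by linarith : (0:ℝ) < u z₀ - W z₀ - θ)).ne'
  have hpos := integral_flux_pos hg hΩ hg0 hneg hC hc (hsupp.trans hSΩ) hψ0 hψz
  rw [pLap_eq_flux] at hz
  -- Where `ψ` vanishes it has a minimum, so its gradient vanishes too.
  have hae : ∀ᵐ x : EuD N, ⟪‖g x‖ ^ (p - 2) • g x, gradient ψ x⟫
      ≤ ⟪‖gradient u x‖ ^ (p - 2) • gradient u x, gradient ψ x⟫ := by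
    filter_upwards [hu.ae_differentiableAt (μ := volume)] with x hx
    by_cases hx1 : x ∈ Ω ∧ θ < u x - W x
    · have hloc : ψ =ᶠ[𝓝 x] fun y => u y - W y - θ := by
        filter_upwards [hΩ.mem_nhds hx1.1, (isOpen_lt continuous_const
          (hu.continuous.sub hW.continuous)).mem_nhds hx1.2] with y hy1 hy2
        rw [hψ, indicator_of_mem hy1]
        have hy2' : θ < u y - W y := hy2
        exact max_eq_left (by linarith)
      have hgr : gradient ψ x = gradient u x - g x := by
        have h1 : HasGradientAt u (gradient u x) x := hx.hasGradientAt
        have h2 : HasGradientAt (fun y => u y - W y - θ) (gradient u x - g x) x := by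
          have := (h1.hasFDerivAt.sub (hWg x).hasFDerivAt).sub_const θ
          rw [← map_sub] at this
          exact this
        exact (h2.congr_of_eventuallyEq hloc).gradient
      have := flux_mono hp (gradient u x) (g x)
      rw [hgr]
      rw [inner_sub_left] at this
      linarith
    · have hx0 : ψ x = 0 := by
        by_cases hxΩ : x ∈ Ω
        · have : ¬ θ < u x - W x := fun h => hx1 ⟨hxΩ, h⟩
          rw [hψ, indicator_of_mem hxΩ]
          exact max_eq_right (by linarith)
        · exact indicator_of_notMem hxΩ _
      have hmin : IsLocalMin ψ x := Eventually.of_forall fun y => by rw [hx0]; exact hψ0 y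
      have : gradient ψ x = 0 := by simp [gradient, hmin.fderiv_eq_zero]
      simp [this]
  have hint1 : Integrable fun x => ⟪‖g x‖ ^ (p - 2) • g x, gradient ψ x⟫ := by
    by_contra h
    rw [integral_undef h] at hpos
    exact lt_irrefl _ hpos
  have hint2 : Integrable fun x => ⟪‖gradient u x‖ ^ (p - 2) • gradient u x, gradient ψ x⟫ := by
    have hb : Integrable (S.indicator fun _ : EuD N => (L : ℝ) ^ (p - 1) * C) :=
      (integrable_indicator_iff hSc.measurableSet).2 (integrableOn_const hSc.measure_lt_top.ne)
    refine hb.mono' ((measurable_flux p u).inner (measurable_gradient _)).aestronglyMeasurable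
      (Eventually.of_forall fun x => ?_)
    by_cases hx : x ∈ S
    · rw [indicator_of_mem hx]
      refine (norm_inner_le_norm _ _).trans ?_
      exact mul_le_mul (norm_flux_le hp hu x) (norm_gradient_le hC x) (norm_nonneg _)
        (by positivity)
    · rw [indicator_of_notMem hx, gradient_eq_zero_of_notMem_tsupport fun h => hx (hsupp h)]
      simp
  have := integral_mono_ae hint1 hint2 hae
  linarith

/-! ### The barrier -/

/-- The barrier `z_N (β - κ (exp(-μ|z-ξ|²) - exp(-4μ)))`: it equals `β z_N` on `|z - ξ| = 2` and
vanishes on `{z_N = 0}`. -/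
def barW (i₀ : Fin N) (μ β κ : ℝ) (ξ z : EuD N) : ℝ :=
  z i₀ * (β - κ * (Real.exp (-μ * ‖z - ξ‖ ^ 2) - Real.exp (-4 * μ)))

/-- The gradient of `barW`. -/
def barG (i₀ : Fin N) (μ β κ : ℝ) (ξ z : EuD N) : EuD N :=
  (β - κ * (Real.exp (-μ * ‖z - ξ‖ ^ 2) - Real.exp (-4 * μ))) • EuclideanSpace.single i₀ 1
    + (2 * μ * κ * z i₀ * Real.exp (-μ * ‖z - ξ‖ ^ 2)) • (z - ξ)

/-- The polynomial governing the sign of `pOp` for the barrier; the last argument is the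
gradient. -/
def barQ (i₀ : Fin N) (p μ : ℝ) (ξ z a : EuD N) : ℝ :=
  ‖a‖ ^ 2 * (-2 * (z - ξ) i₀ + 2 * μ * z i₀ * ‖z - ξ‖ ^ 2 - N * z i₀)
    + (p - 2) * (-2 * ⟪z - ξ, a⟫ * a i₀ + 2 * μ * z i₀ * ⟪z - ξ, a⟫ ^ 2 - z i₀ * ‖a‖ ^ 2)

lemma hasFDerivAt_coord (i₀ : Fin N) (z : EuD N) :
    HasFDerivAt (fun z : EuD N => z i₀) (EuclideanSpace.proj (𝕜 := ℝ) i₀) z :=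
  (EuclideanSpace.proj (𝕜 := ℝ) i₀).hasFDerivAt

lemma hasFDerivAt_gauss (μ : ℝ) (ξ z : EuD N) :
    HasFDerivAt (fun z : EuD N => Real.exp (-μ * ‖z - ξ‖ ^ 2))
      (Real.exp (-μ * ‖z - ξ‖ ^ 2) • ((-μ) • (2 • innerSL ℝ (z - ξ)))) z := by
  have h := (((hasFDerivAt_id z).sub_const ξ).norm_sq.const_mul (-μ)).exp
  exact h

lemma barW_hasGradientAt (i₀ : Fin N) (μ β κ : ℝ) (ξ z : EuD N) :
    HasGradientAt (barW i₀ μ β κ ξ) (barG i₀ μ β κ ξ z) z := by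
  rw [hasGradientAt_iff_hasFDerivAt]
  have h := (hasFDerivAt_coord i₀ z).mul
    (((hasFDerivAt_gauss μ ξ z).sub_const (Real.exp (-4 * μ))).const_mul κ |>.const_sub β)
  refine h.congr_fderiv ?_
  ext v
  simp [barG, EuclideanSpace.inner_single_left]
  ring

lemma contDiff_coord (i₀ : Fin N) : ContDiff ℝ 1 (fun z : EuD N => z i₀) :=
  (EuclideanSpace.proj (𝕜 := ℝ) i₀).contDiff

lemma contDiff_gauss (μ : ℝ) (ξ : EuD N) :
    ContDiff ℝ 1 (fun z : EuD N => Real.exp (-μ * ‖z - ξ‖ ^ 2)) :=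
  (contDiff_const.mul ((contDiff_id.sub contDiff_const).norm_sq ℝ)).exp

lemma contDiff_barW (i₀ : Fin N) (μ β κ : ℝ) (ξ : EuD N) : ContDiff ℝ 1 (barW i₀ μ β κ ξ) :=
  (contDiff_coord i₀).mul (contDiff_const.sub
    (contDiff_const.mul ((contDiff_gauss μ ξ).sub contDiff_const)))

lemma contDiff_barG (i₀ : Fin N) (μ β κ : ℝ) (ξ : EuD N) : ContDiff ℝ 1 (barG i₀ μ β κ ξ) :=
  ((contDiff_const.sub (contDiff_const.mul
    ((contDiff_gauss μ ξ).sub contDiff_const))).smul contDiff_const).add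
  (((contDiff_const.mul (contDiff_coord i₀)).mul (contDiff_gauss μ ξ)).smul
    (contDiff_id.sub contDiff_const))

lemma fderiv_barG (i₀ : Fin N) (μ β κ : ℝ) (ξ z v : EuD N) :
    fderiv ℝ (barG i₀ μ β κ ξ) z v = (2 * μ * κ * Real.exp (-μ * ‖z - ξ‖ ^ 2)) •
      (⟪z - ξ, v⟫ • EuclideanSpace.single i₀ 1 + v i₀ • (z - ξ)
        - (2 * μ * z i₀ * ⟪z - ξ, v⟫) • (z - ξ) + z i₀ • v) := by
  have h1 := (((hasFDerivAt_gauss μ ξ z).sub_const (Real.exp (-4 * μ))).const_mul κ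
    |>.const_sub β).smul_const (EuclideanSpace.single i₀ (1 : ℝ) : EuD N)
  have h2 := (((hasFDerivAt_coord i₀ z).const_mul (2 * μ * κ)).mul
    (hasFDerivAt_gauss μ ξ z)).smul ((hasFDerivAt_id z).sub_const ξ)
  have h3 : fderiv ℝ (barG i₀ μ β κ ξ) z = _ := (h1.add h2).fderiv
  rw [h3]
  ext j
  simp only [PiLp.add_apply, PiLp.sub_apply, PiLp.smul_apply, PiLp.single_apply,
    add_apply, ContinuousLinearMap.smulRight_apply,
    neg_apply, smul_apply, innerSL_apply_apply,
    ContinuousLinearMap.id_apply, smul_eq_mul, Pi.mul_apply, id]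
  have hv : (EuclideanSpace.proj i₀ : EuD N →L[ℝ] ℝ) v = v i₀ := rfl
  rw [hv]
  ring

lemma trace_formula (i₀ : Fin N) (d : EuD N) (A B C M : ℝ) :
    ∑ i, ((A * ⟪d, EuclideanSpace.single i 1⟫) • EuclideanSpace.single i₀ (1 : ℝ)
      + (B * (EuclideanSpace.single i (1 : ℝ) : EuD N) i₀) • d
      + (C * ⟪d, EuclideanSpace.single i 1⟫) • d
      + M • (EuclideanSpace.single i 1 : EuD N)) i
    = (A + B) * d i₀ + C * ‖d‖ ^ 2 + M * N := by
  have hn : ‖d‖ ^ 2 = ∑ i, d i * d i := by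
    rw [← real_inner_self_eq_norm_sq, inner_eq_sum_coord]
  have hsum : ∑ i, C * d i * d i = C * ‖d‖ ^ 2 := by
    rw [hn, Finset.mul_sum]
    exact Finset.sum_congr rfl fun i _ => by ring
  simp only [EuclideanSpace.inner_single_right, PiLp.add_apply, PiLp.smul_apply, smul_eq_mul,
    PiLp.single_apply, Finset.sum_add_distrib, conj_trivial, one_mul, hsum]
  simp
  ring

/-- The `p`-Laplacian of the barrier, up to a positive factor. -/
lemma pOp_barG (i₀ : Fin N) (p μ β κ : ℝ) (ξ z : EuD N) :
    pOp p (barG i₀ μ β κ ξ) z = -(2 * μ * κ * Real.exp (-μ * ‖z - ξ‖ ^ 2)) *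
      barQ i₀ p μ ξ z (barG i₀ μ β κ ξ z) := by
  set k := 2 * μ * κ * Real.exp (-μ * ‖z - ξ‖ ^ 2) with hk
  have htr : ∑ i, (fderiv ℝ (barG i₀ μ β κ ξ) z (EuclideanSpace.single i 1)) i
      = k * (2 * (z - ξ) i₀ + -(2 * μ * z i₀) * ‖z - ξ‖ ^ 2 + z i₀ * N) := by
    have t := trace_formula i₀ (z - ξ) 1 1 (-(2 * μ * z i₀)) (z i₀)
    rw [show (2 : ℝ) * (z - ξ) i₀ = (1 + 1) * (z - ξ) i₀ by ring, ← t, Finset.mul_sum]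
    refine Finset.sum_congr rfl fun i _ => ?_
    rw [fderiv_barG, ← hk]
    simp only [PiLp.add_apply, PiLp.sub_apply, PiLp.smul_apply, smul_eq_mul]
    ring
  rw [pOp, htr, fderiv_barG, ← hk, barQ]
  generalize barG i₀ μ β κ ξ z = a
  simp only [inner_add_right, inner_sub_right, real_inner_smul_right,
    EuclideanSpace.inner_single_right, real_inner_self_eq_norm_sq, real_inner_comm a,
    conj_trivial]
  ring

/-- At the unperturbed gradient `α e_N` the polynomial is positive, once `μ` is large. -/
lemma barQ_pos {p : ℝ} (hp : 1 < p) (i₀ : Fin N) {s : ℝ} (hs : 0 < s) :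
    ∃ μ : ℝ, 0 < μ ∧ ∀ α : ℝ, 0 < α → ∀ ξ z : EuD N, 0 < ξ i₀ → 0 ≤ z i₀ → s ≤ ‖z - ξ‖ →
      0 < barQ i₀ p μ ξ z (α • EuclideanSpace.single i₀ 1) := by
  set m := min 1 (p - 1) with hm
  have hm0 : 0 < m := lt_min one_pos (by linarith)
  have hN : (0 : ℝ) ≤ N := Nat.cast_nonneg N
  refine ⟨(3 * p + N) / (m * s ^ 2), by positivity, fun α hα ξ z hξ hz hd => ?_⟩
  set μ := (3 * p + N) / (m * s ^ 2) with hμ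
  have hμ0 : 0 < μ := by positivity
  have hμm : μ * (m * s ^ 2) = 3 * p + N := by rw [hμ]; field_simp
  set d := z - ξ with hd'
  have hd0 : d i₀ = z i₀ - ξ i₀ := by simp [hd']
  have hle : d i₀ ^ 2 ≤ ‖d‖ ^ 2 := by
    rw [← sq_abs (d i₀)]
    have h := PiLp.norm_apply_le d i₀
    rw [Real.norm_eq_abs] at h
    gcongr
  have hmd : m * s ^ 2 ≤ ‖d‖ ^ 2 + (p - 2) * d i₀ ^ 2 := by
    have h1 : m * s ^ 2 ≤ m * ‖d‖ ^ 2 := by gcongr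
    have h2 : m ≤ 1 := min_le_left _ _
    have h3 : m ≤ p - 1 := min_le_right _ _
    nlinarith [sq_nonneg (d i₀)]
  have e : barQ i₀ p μ ξ z (α • EuclideanSpace.single i₀ 1)
      = α ^ 2 * (2 * (p - 1) * ξ i₀ + z i₀ * (2 * (μ * (‖d‖ ^ 2 + (p - 2) * d i₀ ^ 2))
        - 2 * (p - 1) - (N + (p - 2)))) := by
    simp only [barQ, ← hd', norm_smul, real_inner_smul_right, EuclideanSpace.inner_single_right,
      PiLp.smul_apply, PiLp.single_apply, PiLp.norm_single, Real.norm_eq_abs, hd0,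
      mul_pow, sq_abs]
    simp
    ring
  rw [e]
  have h4 : 3 * p + N ≤ μ * (‖d‖ ^ 2 + (p - 2) * d i₀ ^ 2) := by rw [← hμm]; gcongr
  have h5 : 0 ≤ z i₀ * (2 * (μ * (‖d‖ ^ 2 + (p - 2) * d i₀ ^ 2))
        - 2 * (p - 1) - (N + (p - 2))) := mul_nonneg hz (by linarith)
  have h6 : 0 < 2 * (p - 1) * ξ i₀ := by have : 0 < p - 1 := by linarith
                                         positivity
  have : 0 < α ^ 2 := by positivity
  exact mul_pos this (by linarith)

/-- By compactness, positivity persists for gradients near `α e_N`, uniformly in the centre. -/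
lemma barQ_pos_nhds {p : ℝ} (hp : 1 < p) (i₀ : Fin N) {s α c : ℝ} (hs : 0 < s) (hα : 0 < α)
    (hc : 0 < c) :
    ∃ μ : ℝ, 0 < μ ∧ ∃ τ : ℝ, 0 < τ ∧ ∀ ξ z a : EuD N, ‖ξ‖ = 1 → c ≤ ξ i₀ → 0 ≤ z i₀ → s ≤ ‖z - ξ‖ →
      ‖z - ξ‖ ≤ 2 → ‖a - α • EuclideanSpace.single i₀ 1‖ < τ → 0 < barQ i₀ p μ ξ z a := by
  obtain ⟨μ, hμ, hQ⟩ := barQ_pos hp i₀ hs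
  have hcoord : Continuous fun z : EuD N => z i₀ := (contDiff_coord i₀).continuous
  set K : Set (EuD N × EuD N) := {q | ‖q.1‖ = 1 ∧ c ≤ q.1 i₀ ∧ 0 ≤ q.2 i₀ ∧
    s ≤ ‖q.2 - q.1‖ ∧ ‖q.2 - q.1‖ ≤ 2} with hK
  have hKc : IsCompact K := by
    refine Metric.isCompact_of_isClosed_isBounded ?_ ?_
    · have k1 : Continuous fun q : EuD N × EuD N => ‖q.1‖ := by fun_prop
      have k2 : Continuous fun q : EuD N × EuD N => ‖q.2 - q.1‖ := by fun_prop
      refine (isClosed_eq k1 continuous_const).inter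
        ((isClosed_le continuous_const (hcoord.comp continuous_fst)).inter
        ((isClosed_le continuous_const (hcoord.comp continuous_snd)).inter
        ((isClosed_le continuous_const k2).inter
        (isClosed_le k2 continuous_const))))
    · refine (isBounded_iff_forall_norm_le).2 ⟨3, fun q hq => ?_⟩
      obtain ⟨h1, -, -, -, h5⟩ := hq
      have : ‖q.2‖ ≤ ‖q.2 - q.1‖ + ‖q.1‖ := by simpa using norm_add_le (q.2 - q.1) q.1
      rw [Prod.norm_def]
      exact max_le (by linarith) (by linarith)
  have hcont : Continuous fun q : EuD N × (EuD N × EuD N) => barQ i₀ p μ q.2.1 q.2.2 q.1 := by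
    have c1 : Continuous fun q : EuD N × (EuD N × EuD N) => q.1 i₀ := hcoord.comp continuous_fst
    have c2 : Continuous fun q : EuD N × (EuD N × EuD N) => q.2.2 i₀ :=
      hcoord.comp (continuous_snd.comp continuous_snd)
    have c3 : Continuous fun q : EuD N × (EuD N × EuD N) => (q.2.2 - q.2.1) i₀ :=
      hcoord.comp (by fun_prop)
    unfold barQ
    fun_prop
  have hev := hKc.eventually_forall_of_forall_eventually
    (x₀ := α • (EuclideanSpace.single i₀ 1 : EuD N))
    (P := fun a q => 0 < barQ i₀ p μ q.1 q.2 a) (fun q hq =>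
      hcont.continuousAt.eventually (lt_mem_nhds
        (hQ α hα q.1 q.2 (hc.trans_le hq.2.1) hq.2.2.1 hq.2.2.2.1)))
  obtain ⟨τ, hτ, h⟩ := Metric.eventually_nhds_iff.1 hev
  refine ⟨μ, hμ, τ, hτ, fun ξ z a h1 h2 h3 h4 h5 h6 => ?_⟩
  exact h (by rwa [dist_eq_norm]) (ξ, z) ⟨h1, h2, h3, h4, h5⟩

lemma barG_near (i₀ : Fin N) {μ α β κ : ℝ} (hμ : 0 < μ) (hκ : 0 ≤ κ) {ξ z : EuD N}
    (hξ : ‖ξ‖ = 1) (hz : ‖z - ξ‖ ≤ 2) :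
    ‖barG i₀ μ β κ ξ z - α • EuclideanSpace.single i₀ 1‖ ≤ |β - α| + κ * (1 + 12 * μ) := by
  have hE0 := Real.exp_pos (-μ * ‖z - ξ‖ ^ 2)
  have hE1 : Real.exp (-μ * ‖z - ξ‖ ^ 2) ≤ 1 :=
    Real.exp_le_one_iff.2 (by nlinarith [sq_nonneg ‖z - ξ‖])
  have hF0 := Real.exp_pos (-4 * μ)
  have hF1 : Real.exp (-4 * μ) ≤ 1 := Real.exp_le_one_iff.2 (by linarith)
  rw [barG]
  generalize Real.exp (-μ * ‖z - ξ‖ ^ 2) = E at *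
  generalize Real.exp (-4 * μ) = F at *
  have hz3 : ‖z‖ ≤ 3 := by
    have : ‖z‖ ≤ ‖z - ξ‖ + ‖ξ‖ := by simpa using norm_add_le (z - ξ) ξ
    linarith
  have hzi : |z i₀| ≤ 3 := by
    have := PiLp.norm_apply_le z i₀
    rw [Real.norm_eq_abs] at this
    linarith
  have e : (β - κ * (E - F)) • (EuclideanSpace.single i₀ 1 : EuD N)
      + (2 * μ * κ * z i₀ * E) • (z - ξ) - α • EuclideanSpace.single i₀ 1
      = (β - α - κ * (E - F)) • (EuclideanSpace.single i₀ 1 : EuD N)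
        + (2 * μ * κ * z i₀ * E) • (z - ξ) := by
    module
  rw [e]
  refine (norm_add_le _ _).trans ?_
  rw [norm_smul, norm_smul, PiLp.norm_single, norm_one, mul_one, Real.norm_eq_abs,
    Real.norm_eq_abs]
  have h1 : |β - α - κ * (E - F)| ≤ |β - α| + κ := by
    refine (abs_sub _ _).trans ?_
    rw [abs_mul, abs_of_nonneg hκ]
    have : |E - F| ≤ 1 := abs_le.2 ⟨by linarith, by linarith⟩
    nlinarith
  have h2 : |2 * μ * κ * z i₀ * E| * ‖z - ξ‖ ≤ 2 * μ * κ * 3 * 1 * 2 := by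
    rw [abs_mul, abs_mul, abs_mul, abs_mul, abs_of_pos hμ, abs_of_nonneg hκ,
      abs_of_pos hE0, abs_of_pos (two_pos : (0 : ℝ) < 2)]
    gcongr
  linarith

/-- Rescaling multiplies `pOp` by the inverse of the scale. -/
lemma pOp_scale (p : ℝ) {g : EuD N → EuD N} (hg : ContDiff ℝ 1 g) (c : ℝ) (z : EuD N) :
    pOp p (fun z => g (c • z)) z = c * pOp p g (c • z) := by
  have h : ∀ v, fderiv ℝ (fun z => g (c • z)) z v = c • fderiv ℝ g (c • z) v := by
    intro v
    have h1 : HasFDerivAt g (fderiv ℝ g (c • z)) (c • z) :=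
      (hg.differentiable one_ne_zero _).hasFDerivAt
    have h2 : HasFDerivAt (fun z : EuD N => c • z) (c • ContinuousLinearMap.id ℝ (EuD N)) z :=
      (hasFDerivAt_id z).const_smul c
    have h3 := (h1.comp z h2).fderiv
    have h4 : fderiv ℝ (fun z => g (c • z)) z = _ := h3
    rw [h4]
    simp
  simp only [pOp, h, inner_smul_right, PiLp.smul_apply, smul_eq_mul, ← Finset.mul_sum]
  ring

lemma hasGradientAt_scale {W : EuD N → ℝ} {g : EuD N → EuD N}
    (h : ∀ z, HasGradientAt W (g z) z) {ρ : ℝ} (hρ : ρ ≠ 0) (z : EuD N) :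
    HasGradientAt (fun z => ρ * W (ρ⁻¹ • z)) (g (ρ⁻¹ • z)) z := by
  have h1 := (h (ρ⁻¹ • z)).hasFDerivAt
  have h2 : HasFDerivAt (fun z : EuD N => ρ⁻¹ • z) (ρ⁻¹ • ContinuousLinearMap.id ℝ (EuD N)) z :=
    (hasFDerivAt_id z).const_smul ρ⁻¹
  rw [hasGradientAt_iff_hasFDerivAt]
  refine ((h1.comp z h2).const_mul ρ).congr_fderiv ?_
  ext v
  simp [hρ]

/-! ### Improving the slope -/

set_option maxHeartbeats 1000000 in
/-- If `u ≤ (α + ε) x_N` near `0` for every `ε > 0`, but at arbitrarily small points `u` falls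
below `α x_N` by a fixed multiple of `|x|`, then the slope `α` can be lowered: the deficit on a
ball of radius comparable with `|x|` propagates down to a neighbourhood of `0` through the
barrier `barW`, rescaled to size `|x|`. -/
lemma improve_slope_s19 {p : ℝ} (hp : 1 < p) (i₀ : Fin N) {u : EuD N → ℝ} {L : ℝ≥0}
    (hu : LipschitzWith L u)
    (hpos : ∀ z ∈ ball (0 : EuD N) 1 ∩ {x | 0 < x i₀}, 0 ≤ u z)
    (hh : pHarmonicOn p ({x | 0 < u x} ∩ (ball (0 : EuD N) 1 ∩ {x | 0 < x i₀})) u)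
    {α δ : ℝ} (hα : 0 < α) (hδ : 0 < δ)
    (hup : ∀ ε > 0, ∃ r > 0, ∀ z : EuD N, ‖z‖ < r → 0 ≤ z i₀ → u z ≤ (α + ε) * z i₀)
    (hfreq : ∀ r > 0, ∃ x : EuD N, ‖x‖ < r ∧ 0 < x i₀ ∧ u x < α * x i₀ - δ * ‖x‖) :
    ∃ a < α, ∃ r > 0, ∀ z : EuD N, ‖z‖ < r → 0 ≤ z i₀ → u z ≤ a * z i₀ := by
  have hL : (0 : ℝ) ≤ L := L.2
  obtain ⟨s, hs, hs1, hsL⟩ : ∃ s : ℝ, 0 < s ∧ s ≤ 1 ∧ s * (L + α) ≤ δ / 2 := by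
    refine ⟨min 1 (δ / (2 * (L + α))), by positivity, min_le_left _ _, ?_⟩
    have h := min_le_right 1 (δ / (2 * (L + α)))
    calc _ ≤ δ / (2 * (L + α)) * (L + α) := by gcongr
      _ = δ / 2 := by field_simp
  obtain ⟨μ, hμ, τ, hτ, hQ⟩ := barQ_pos_nhds hp i₀ hs hα (div_pos hδ hα)
  set c₀ := Real.exp (-μ * (3 / 2) ^ 2) - Real.exp (-4 * μ) with hc₀
  have hc₀0 : 0 < c₀ := sub_pos.2 (Real.exp_lt_exp.2 (by nlinarith))
  obtain ⟨κ, hκ, hκα, hκδ, hκτ⟩ :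
      ∃ κ : ℝ, 0 < κ ∧ κ ≤ α ∧ κ ≤ δ / 4 ∧ κ * (1 + 12 * μ) ≤ τ / 4 := by
    refine ⟨min α (min (δ / 4) (τ / 4 / (1 + 12 * μ))), by positivity, min_le_left _ _,
      (min_le_right _ _).trans (min_le_left _ _), ?_⟩
    have h : min α (min (δ / 4) (τ / 4 / (1 + 12 * μ))) ≤ τ / 4 / (1 + 12 * μ) :=
      (min_le_right _ _).trans (min_le_right _ _)
    exact (le_div_iff₀ (by positivity)).1 h
  obtain ⟨ε, hε, hετ, hεκ⟩ : ∃ ε : ℝ, 0 < ε ∧ ε ≤ τ / 4 ∧ ε ≤ κ * c₀ / 2 :=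
    ⟨min (τ / 4) (κ * c₀ / 2), by positivity, min_le_left _ _, min_le_right _ _⟩
  obtain ⟨r₁, hr₁, hup₁⟩ := hup ε hε
  obtain ⟨x, hxr, hx0, hux⟩ := hfreq (min r₁ 1 / 4) (by positivity)
  have hxr₁ : 4 * ‖x‖ < r₁ := by linarith [min_le_left r₁ 1]
  have hx1 : 4 * ‖x‖ < 1 := by linarith [min_le_right r₁ 1]
  have hcoord : ∀ w : EuD N, |w i₀| ≤ ‖w‖ := fun w => by
    have := PiLp.norm_apply_le w i₀
    rwa [Real.norm_eq_abs] at this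
  set ρ := ‖x‖ with hρ
  have hρ0 : 0 < ρ := hx0.trans_le ((le_abs_self _).trans (hcoord x))
  have hzn : ∀ z : EuD N, ‖z‖ ≤ ‖z - x‖ + ρ := fun z => by
    simpa using norm_add_le (z - x) x
  set ξ := ρ⁻¹ • x with hξ
  have hξ1 : ‖ξ‖ = 1 := by rw [hξ, norm_smul, ← hρ, norm_inv, Real.norm_eq_abs,
    abs_of_pos hρ0, inv_mul_cancel₀ hρ0.ne']
  have hux0 : 0 ≤ u x := hpos x ⟨by rw [mem_ball_zero_iff]; linarith, hx0⟩
  have hξc : δ / α ≤ ξ i₀ := by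
    rw [hξ, PiLp.smul_apply, smul_eq_mul, inv_mul_eq_div, div_le_div_iff₀ hα hρ0]
    linarith
  have hdist : ∀ z : EuD N, ‖ρ⁻¹ • z - ξ‖ = ‖z - x‖ / ρ := fun z => by
    rw [hξ, ← smul_sub, norm_smul, norm_inv, Real.norm_eq_abs, abs_of_pos hρ0, inv_mul_eq_div]
  set W : EuD N → ℝ := fun z => ρ * barW i₀ μ (α + ε) κ ξ (ρ⁻¹ • z) with hW
  set g : EuD N → EuD N := fun z => barG i₀ μ (α + ε) κ ξ (ρ⁻¹ • z) with hg
  have hWe : ∀ z, W z = z i₀ * (α + ε - κ *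
      (Real.exp (-μ * (‖z - x‖ / ρ) ^ 2) - Real.exp (-4 * μ))) := fun z => by
    rw [hW]
    simp only [barW, hdist, PiLp.smul_apply, smul_eq_mul]
    field_simp
  have hexp1 : ∀ t : ℝ, Real.exp (-μ * t ^ 2) - Real.exp (-4 * μ) ≤ 1 := fun t => by
    have h1 : Real.exp (-μ * t ^ 2) ≤ 1 := Real.exp_le_one_iff.2 (by nlinarith [sq_nonneg t])
    linarith [Real.exp_pos (-4 * μ)]
  have hWlow : ∀ z : EuD N, 0 ≤ z i₀ → (α + ε - κ) * z i₀ ≤ W z := fun z hz => by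
    rw [hWe, mul_comm]
    gcongr
    nlinarith [hexp1 (‖z - x‖ / ρ)]
  -- The deficit at `x` persists on the ball of radius `s * ρ`.
  have hsmall : ∀ z : EuD N, 0 ≤ z i₀ → ‖z - x‖ ≤ s * ρ → u z ≤ W z := fun z hz hzx => by
    refine le_trans ?_ (hWlow z hz)
    have h1 : u z - u x ≤ L * ‖z - x‖ := by
      have := hu.dist_le_mul z x
      rw [Real.dist_eq, dist_eq_norm] at this
      exact (le_abs_self _).trans this
    have h2 : x i₀ - z i₀ ≤ ‖z - x‖ := by
      have := hcoord (z - x)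
      rw [PiLp.sub_apply, abs_sub_comm] at this
      exact (le_abs_self _).trans this
    have h3 : (L + α) * ‖z - x‖ ≤ δ / 2 * ρ := by
      calc (L + α) * ‖z - x‖ ≤ (L + α) * (s * ρ) := by gcongr
        _ = s * (L + α) * ρ := by ring
        _ ≤ δ / 2 * ρ := by gcongr
    have h4 : z i₀ ≤ 2 * ρ := by
      have := (le_abs_self _).trans (hcoord z)
      nlinarith [hzn z]
    have h5 : κ * z i₀ ≤ δ / 4 * (2 * ρ) := by gcongr
    nlinarith [mul_nonneg hε.le hz]
  set K : Set (EuD N) := {z | 0 ≤ z i₀ ∧ s * ρ ≤ ‖z - x‖ ∧ ‖z - x‖ ≤ 2 * ρ} with hK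
  set Ω : Set (EuD N) := {z | 0 < z i₀ ∧ s * ρ < ‖z - x‖ ∧ ‖z - x‖ < 2 * ρ} with hΩ
  have c1 : Continuous fun z : EuD N => z i₀ := (contDiff_coord i₀).continuous
  have c2 : Continuous fun z : EuD N => ‖z - x‖ := by fun_prop
  have hKc : IsCompact K := by
    refine Metric.isCompact_of_isClosed_isBounded ((isClosed_le continuous_const c1).inter
      ((isClosed_le continuous_const c2).inter (isClosed_le c2 continuous_const)))
      (isBounded_iff_forall_norm_le.2 ⟨3 * ρ, fun z hz => ?_⟩)
    linarith [hzn z, hz.2.2]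
  have hΩo : IsOpen Ω := (isOpen_lt continuous_const c1).inter
    ((isOpen_lt continuous_const c2).inter (isOpen_lt c2 continuous_const))
  have hscale : ContDiff ℝ 1 fun z : EuD N => ρ⁻¹ • z := contDiff_const_smul ρ⁻¹
  have hQΩ : ∀ z ∈ Ω, 0 < barQ i₀ p μ ξ (ρ⁻¹ • z) (g z) := fun z hz => by
    have h2 : ‖ρ⁻¹ • z - ξ‖ ≤ 2 := by rw [hdist, div_le_iff₀ hρ0]; exact hz.2.2.le
    refine hQ ξ (ρ⁻¹ • z) (g z) hξ1 hξc ?_ ?_ h2 ?_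
    · exact mul_nonneg (inv_nonneg.2 hρ0.le) hz.1.le
    · rw [hdist, le_div_iff₀ hρ0]; exact hz.2.1.le
    · refine (barG_near i₀ hμ hκ.le hξ1 h2).trans_lt ?_
      rw [add_sub_cancel_left, abs_of_pos hε]
      linarith
  have hcomp : ∀ z ∈ Ω, u z ≤ W z := by
    refine comparison_s19 hp hu (D := ball (0 : EuD N) 1 ∩ {x | 0 < x i₀})
      (isOpen_ball.inter (isOpen_lt continuous_const c1)) hΩo hKc
      (fun z hz => ⟨hz.1.le, hz.2.1.le, hz.2.2.le⟩)
      (fun z hz => ⟨by rw [mem_ball_zero_iff]; linarith [hzn z, hz.2.2], hz.1⟩) hh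
      (contDiff_const.mul ((contDiff_barW i₀ μ (α + ε) κ ξ).comp hscale))
      (g := g) (fun z => hasGradientAt_scale (barW_hasGradientAt i₀ μ (α + ε) κ ξ) hρ0.ne' z)
      ((contDiff_barG i₀ μ (α + ε) κ ξ).comp hscale) ?_ ?_ ?_ ?_
    · intro z hz h0
      have := hQΩ z hz
      rw [h0] at this
      simp [barQ] at this
    · intro z hz
      rw [hg, pOp_scale p (contDiff_barG i₀ μ (α + ε) κ ξ), pOp_barG]
      have h1 := hQΩ z hz
      have h2 := Real.exp_pos (-μ * ‖ρ⁻¹ • z - ξ‖ ^ 2)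
      rw [neg_mul, mul_neg, neg_lt_zero]
      exact mul_pos (inv_pos.2 hρ0) (mul_pos (by positivity) h1)
    · intro z hz
      exact le_trans (mul_nonneg (by linarith) hz.1.le) (hWlow z hz.1.le)
    · intro z hz hzΩ
      have hub : u z ≤ (α + ε) * z i₀ := hup₁ z (by linarith [hzn z, hz.2.2]) hz.1
      by_cases hz0 : z i₀ = 0
      · rw [hWe, hz0, zero_mul]
        rwa [hz0, mul_zero] at hub
      by_cases hz1 : ‖z - x‖ ≤ s * ρ
      · exact hsmall z hz.1 hz1
      have hz2 : ‖z - x‖ = 2 * ρ := by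
        by_contra hne
        exact hzΩ ⟨lt_of_le_of_ne hz.1 (Ne.symm hz0), not_le.1 hz1, lt_of_le_of_ne hz.2.2 hne⟩
      rw [hWe, hz2, mul_div_cancel_right₀ _ hρ0.ne', show -μ * 2 ^ 2 = -4 * μ by ring, sub_self,
        mul_zero, sub_zero, mul_comm]
      exact hub
  refine ⟨α + ε - κ * c₀, by linarith [mul_pos hκ hc₀0], ρ / 2, by positivity,
    fun z hz hzi => ?_⟩
  have hzx : ‖z - x‖ ≤ 3 / 2 * ρ := (norm_sub_le z x).trans (by linarith)
  rcases hzi.eq_or_lt with hz0 | hz0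
  · have := hup₁ z (by linarith) hzi
    rw [← hz0, mul_zero] at this ⊢
    exact this
  have huW : u z ≤ W z := by
    by_cases hz1 : ‖z - x‖ ≤ s * ρ
    · exact hsmall z hzi hz1
    · exact hcomp z ⟨hz0, not_le.1 hz1, by linarith⟩
  refine huW.trans ?_
  rw [hWe, mul_comm, hc₀]
  have ht : ‖z - x‖ / ρ ≤ 3 / 2 := by rwa [div_le_iff₀ hρ0]
  have ht0 : 0 ≤ ‖z - x‖ / ρ := by positivity
  gcongr ?_ * _
  have : Real.exp (-μ * (3 / 2) ^ 2) ≤ Real.exp (-μ * (‖z - x‖ / ρ) ^ 2) := by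
    apply Real.exp_le_exp.2
    have : (‖z - x‖ / ρ) ^ 2 ≤ (3 / 2) ^ 2 := by gcongr
    nlinarith
  nlinarith

/-! ### Reduction to a globally Lipschitz function -/

lemma mem_closure_halfBall (i₀ : Fin N) {z : EuD N} (hz : ‖z‖ < 1) (hz0 : 0 ≤ z i₀) :
    z ∈ closure (ball (0 : EuD N) 1 ∩ {x | 0 < x i₀}) := by
  have hc : Continuous fun t : ℝ => z + t • (EuclideanSpace.single i₀ 1 : EuD N) := by fun_prop
  have ht : Tendsto (fun t : ℝ => z + t • (EuclideanSpace.single i₀ 1 : EuD N))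
      (𝓝[>] 0) (𝓝 z) := by
    have := hc.tendsto 0
    rw [zero_smul, add_zero] at this
    exact this.mono_left nhdsWithin_le_nhds
  refine mem_closure_of_tendsto ht ?_
  have h1 := ht.eventually (isOpen_ball.mem_nhds (mem_ball_zero_iff.2 hz))
  filter_upwards [h1, self_mem_nhdsWithin] with t h2 h3
  refine ⟨h2, ?_⟩
  have h4 : (0 : ℝ) < t := h3
  change 0 < (z + t • (EuclideanSpace.single i₀ 1 : EuD N)) i₀
  simp only [PiLp.add_apply, PiLp.smul_apply, PiLp.single_apply, smul_eq_mul, if_true, mul_one]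
  linarith

/-- A Lipschitz function vanishing on the flat boundary grows at most linearly away from it. -/
lemma le_mul_coord (i₀ : Fin N) {v : EuD N → ℝ} {L : ℝ≥0} (hv : LipschitzWith L v)
    (hflat : ∀ z : EuD N, ‖z‖ < 1 → z i₀ = 0 → v z = 0) {z : EuD N} (hz : ‖z‖ < 1)
    (hz0 : 0 ≤ z i₀) : v z ≤ L * z i₀ := by
  set e : EuD N := EuclideanSpace.single i₀ 1 with he
  have hen : ‖e‖ = 1 := by rw [he, PiLp.norm_single, norm_one]
  have hee : e i₀ = 1 := by simp [he]
  have hze : ⟪z, e⟫ = z i₀ := by rw [he, EuclideanSpace.inner_single_right]; simp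
  have hn : ‖z - z i₀ • e‖ ^ 2 ≤ ‖z‖ ^ 2 := by
    rw [norm_sub_sq_real, inner_smul_right, hze, norm_smul, hen, mul_one, Real.norm_eq_abs,
      sq_abs]
    nlinarith [sq_nonneg (z i₀)]
  have hn1 : ‖z - z i₀ • e‖ < 1 := (pow_le_pow_iff_left₀ (norm_nonneg _) (norm_nonneg _) two_ne_zero |>.1 hn).trans_lt hz
  have h0 := hflat _ hn1 (by simp [hee])
  have h := hv.dist_le_mul z (z - z i₀ • e)
  rw [h0, Real.dist_eq, sub_zero, dist_eq_norm, sub_sub_cancel, norm_smul, hen, mul_one,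
    Real.norm_eq_abs, abs_of_nonneg hz0] at h
  exact (le_abs_self _).trans h

lemma pHarmonicOn_congr {p : ℝ} {u v : EuD N → ℝ} {S : Set (EuD N)} (hS : IsOpen S)
    (huv : EqOn u v S) (h : pHarmonicOn p ({x | 0 < u x} ∩ S) u) :
    pHarmonicOn p ({x | 0 < v x} ∩ S) v := by
  intro φ hφ
  have hset : ({x | 0 < v x} ∩ S) = {x | 0 < u x} ∩ S := by
    ext x
    constructor
    · rintro ⟨h1, h2⟩
      exact ⟨lt_of_lt_of_eq h1 (huv h2).symm, h2⟩
    · rintro ⟨h1, h2⟩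
      exact ⟨lt_of_lt_of_eq h1 (huv h2), h2⟩
  rw [hset] at hφ
  rw [← h φ hφ, pLap, pLap]
  congr 1
  funext x
  by_cases hx : x ∈ tsupport φ
  · have hxS : x ∈ S := (hφ.2.2 hx).2
    have hev : v =ᶠ[𝓝 x] u := by
      filter_upwards [hS.mem_nhds hxS] with y hy using (huv hy).symm
    rw [show gradient v x = gradient u x by rw [gradient, gradient, hev.fderiv_eq]]
  · rw [gradient_eq_zero_of_notMem_tsupport hx, inner_zero_right, inner_zero_right, mul_zero,
      mul_zero]

/-! ### The asymptotic development -/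

/-- Lemma A.4: a nonnegative Lipschitz function on the closed half-ball
`B_1⁺`, `p`-harmonic in `{u > 0}` and vanishing on the flat part of the boundary, has an
asymptotic development `u(x) = α x_N + o(|x|)` as `x → 0` in `B_1⁺`, for some `α ≥ 0`. -/
theorem asymptotic_development_at_flat_boundary
    (N : ℕ) (hN : 0 < N) (p : ℝ) (hp : 1 < p)
    (u : EuD N → ℝ) (L : ℝ≥0)
    (hLip : LipschitzOnWith L u
      (closure (ball (0 : EuD N) 1 ∩ {x | 0 < lastCoord hN x})))
    (hpos : ∀ x ∈ ball (0 : EuD N) 1 ∩ {x | 0 < lastCoord hN x}, 0 ≤ u x)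
    (hharm : pHarmonicOn p
      ({x | 0 < u x} ∩ (ball (0 : EuD N) 1 ∩ {x | 0 < lastCoord hN x})) u)
    (hvan : ∀ x ∈ frontier (ball (0 : EuD N) 1 ∩ {x | 0 < lastCoord hN x}),
      lastCoord hN x = 0 → u x = 0) :
    ∃ a : ℝ, 0 ≤ a ∧
      (fun x => u x - a * lastCoord hN x)
        =o[𝓝[ball (0 : EuD N) 1 ∩ {x | 0 < lastCoord hN x}] 0] fun x => ‖x‖ := by
  set i₀ : Fin N := ⟨N - 1, Nat.sub_lt hN Nat.one_pos⟩ with hi₀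
  have hlast : ∀ x : EuD N, lastCoord hN x = x i₀ := fun x => rfl
  simp only [hlast] at *
  set S : Set (EuD N) := ball (0 : EuD N) 1 ∩ {x | 0 < x i₀} with hS
  have hSo : IsOpen S :=
    isOpen_ball.inter (isOpen_lt continuous_const (contDiff_coord i₀).continuous)
  obtain ⟨v, hv, huv⟩ := hLip.extend_real
  have huvS : EqOn u v S := huv.mono subset_closure
  have hflat : ∀ z : EuD N, ‖z‖ < 1 → z i₀ = 0 → v z = 0 := fun z hz hz0 => by
    have hzc := mem_closure_halfBall i₀ hz hz0.ge
    rw [← huv hzc]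
    refine hvan z ⟨hzc, ?_⟩ hz0
    rw [hSo.interior_eq]
    exact fun h => (lt_irrefl (0 : ℝ)) (hz0 ▸ h.2)
  have hvpos : ∀ z ∈ S, 0 ≤ v z := fun z hz => by rw [← huvS hz]; exact hpos z hz
  have hvh := pHarmonicOn_congr hSo huvS hharm
  -- The slopes of linear functions `a x_N` lying above `u` near the origin.
  set T : Set ℝ := {a | 0 ≤ a ∧ ∃ r > 0, ∀ z : EuD N, ‖z‖ < r → 0 ≤ z i₀ → v z ≤ a * z i₀}
    with hT
  have hTne : T.Nonempty := ⟨L, L.2, 1, one_pos, fun z hz hz0 => le_mul_coord i₀ hv hflat hz hz0⟩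
  have hTb : BddBelow T := ⟨0, fun a ha => ha.1⟩
  set α := sInf T with hα
  have hα0 : 0 ≤ α := le_csInf hTne fun a ha => ha.1
  have hup : ∀ ε > 0, ∃ r > 0, ∀ z : EuD N, ‖z‖ < r → 0 ≤ z i₀ → v z ≤ (α + ε) * z i₀ := by
    intro ε hε
    obtain ⟨a, ⟨-, r, hr, har⟩, haα⟩ := exists_lt_of_csInf_lt hTne (lt_add_of_pos_right α hε)
    exact ⟨r, hr, fun z hz hz0 => (har z hz hz0).trans (by gcongr)⟩
  have hlow : ∀ δ > 0, ∃ r > 0, ∀ z ∈ S, ‖z‖ < r → α * z i₀ - δ * ‖z‖ ≤ v z := by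
    intro δ hδ
    rcases hα0.eq_or_lt with h0 | h0
    · refine ⟨1, one_pos, fun z hz _ => ?_⟩
      rw [← h0, zero_mul]
      exact le_trans (by have := norm_nonneg z; nlinarith) (hvpos z hz)
    by_contra hcon
    push Not at hcon
    obtain ⟨a, haα, r, hr, har⟩ := improve_slope_s19 hp i₀ hv hvpos hvh h0 hδ hup fun r hr => by
      obtain ⟨z, hz, hzr, hzv⟩ := hcon r hr
      exact ⟨z, hzr, hz.2, hzv⟩
    have hmem : max a 0 ∈ T := ⟨le_max_right _ _, r, hr, fun z hz hz0 =>
      (har z hz hz0).trans (by gcongr; exact le_max_left _ _)⟩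
    exact absurd (csInf_le hTb hmem) (not_le.2 (max_lt haα h0))
  refine ⟨α, hα0, isLittleO_iff.2 fun c hc => ?_⟩
  obtain ⟨r₁, hr₁, h1⟩ := hup c hc
  obtain ⟨r₂, hr₂, h2⟩ := hlow c hc
  have hb : ball (0 : EuD N) (min r₁ r₂) ∈ 𝓝 (0 : EuD N) := ball_mem_nhds _ (lt_min hr₁ hr₂)
  filter_upwards [mem_nhdsWithin_of_mem_nhds hb, self_mem_nhdsWithin] with x hx hxS
  rw [mem_ball_zero_iff, lt_min_iff] at hx
  have hx0 : 0 < x i₀ := hxS.2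
  have hxn : x i₀ ≤ ‖x‖ := (le_abs_self _).trans
    (by simpa [Real.norm_eq_abs] using PiLp.norm_apply_le x i₀)
  have h3 := h1 x hx.1 hx0.le
  have h4 := h2 x hxS hx.2
  rw [norm_norm, Real.norm_eq_abs, huvS hxS, abs_le]
  constructor <;> nlinarith
end
end
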